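/- arXiv:2207.06697 — 7 statements merged into one kernel-verified Lean document; each statement's English description precedes it below -/
import Mathlib

section
/- Let r ∈ ℝ, T > 0 and p > 4. Then there exists a constant C = C(r,p,T) > 0 such that for all 0 ≤ s ≤ t ≤ T, sup_{x≥0} ( ∫_s^t [ ∫_0^∞ G_r(t−u,x,z)² dz ]^{p/(p−2)} du )^{(p−2)/2} ≤ C |t−s|^{(p−4)/4}. -/
/-!
Dropping the reflected term, `G_r(τ,x,z)²` is at most
`(4πτ)⁻¹ exp(-2r(x-z) - (x-z)²/(2τ))`. Completing the square turns this into a Gaussian in `z`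
times `exp(2r²τ)`, so its integral over `ℝ` is `exp(2r²τ) / √(8πτ)`, which is at most
`exp(2r²T) τ^(-1/2)` for `τ ≤ T`, uniformly in `x` (`integral_Gr_sq_le`). With `q = p/(p-2)`, the
hypothesis `p > 4` says exactly that `q/2 < 1`, so `(t-u)^(-q/2)` is integrable in `u` up to `t`
(`integral_sub_rpow`), with integral `(t-s)^(1-q/2) / (1-q/2)`; raising this to the power
`(p-2)/2` produces the exponent `(1-q/2)(p-2)/2 = (p-4)/4`.
-/

open MeasureTheory Real Set Filter

/-- Dirichlet heat kernel on `[0,∞)`. -/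
noncomputable def G (t x y : ℝ) : ℝ :=
  (Real.sqrt (4 * Real.pi * t))⁻¹ *
    (Real.exp (-(x - y) ^ 2 / (4 * t)) - Real.exp (-(x + y) ^ 2 / (4 * t)))

/-- Exponentially weighted kernel `G_r(t,x,y) = e^{-r(x-y)} G(t,x,y)`. -/
noncomputable def Gr (r t x y : ℝ) : ℝ := Real.exp (-r * (x - y)) * G t x y

/-- Weighted sup norm `‖v‖_{L_r} = sup_{x ≥ 0} e^{-rx}|v(x)|`. -/
noncomputable def LrNorm (r : ℝ) (v : ℝ → ℝ) : ℝ :=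
  sSup ((fun x => Real.exp (-r * x) * |v x|) '' Ici 0)

/-- Weighted sup norm `‖u‖_{C_r^T} = sup_{t ∈ [0,T]} sup_{x ≥ 0} e^{-rx}|u(t,x)|`. -/
noncomputable def CrNorm (r T : ℝ) (u : ℝ → ℝ → ℝ) : ℝ :=
  sSup ((fun q : ℝ × ℝ => Real.exp (-r * q.2) * |u q.1 q.2|) '' (Icc 0 T ×ˢ Ici 0))

/-- `‖u‖_{C_r^T} < ∞`, expressed as boundedness of the weighted values. -/
def CrBdd (r T : ℝ) (u : ℝ → ℝ → ℝ) : Prop :=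
  BddAbove ((fun q : ℝ × ℝ => Real.exp (-r * q.2) * |u q.1 q.2|) '' (Icc 0 T ×ˢ Ici 0))

/-- Gaussian domination of `G_r²`, with the square completed in the exponent. -/
lemma Gr_sq_le (r τ x z : ℝ) (hτ : 0 < τ) (hx : 0 ≤ x) (hz : 0 ≤ z) :
    (Gr r τ x z) ^ 2 ≤ (4 * π * τ)⁻¹ * exp (2 * r ^ 2 * τ) *
      exp (-(1 / (2 * τ)) * (z - (x + 2 * r * τ)) ^ 2) := by
  have hxz : exp (-(x + z) ^ 2 / (4 * τ)) ≤ exp (-(x - z) ^ 2 / (4 * τ)) := by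
    apply exp_le_exp.2
    refine div_le_div_of_nonneg_right ?_ (by positivity)
    nlinarith [mul_nonneg hx hz]
  have hsq : (exp (-(x - z) ^ 2 / (4 * τ)) - exp (-(x + z) ^ 2 / (4 * τ))) ^ 2
      ≤ (exp (-(x - z) ^ 2 / (4 * τ))) ^ 2 := by
    apply pow_le_pow_left₀ (sub_nonneg.2 hxz)
    linarith [exp_pos (-(x + z) ^ 2 / (4 * τ))]
  have hs : ((√(4 * π * τ))⁻¹) ^ 2 = (4 * π * τ)⁻¹ := by
    rw [inv_pow, sq_sqrt (by positivity)]
  have he : (exp (-r * (x - z))) ^ 2 * (exp (-(x - z) ^ 2 / (4 * τ))) ^ 2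
      = exp (2 * r ^ 2 * τ) * exp (-(1 / (2 * τ)) * (z - (x + 2 * r * τ)) ^ 2) := by
    rw [← exp_nat_mul, ← exp_nat_mul, ← exp_add, ← exp_add]
    congr 1
    push_cast
    field_simp
    ring
  calc (Gr r τ x z) ^ 2
      = (4 * π * τ)⁻¹ * ((exp (-r * (x - z))) ^ 2 *
          (exp (-(x - z) ^ 2 / (4 * τ)) - exp (-(x + z) ^ 2 / (4 * τ))) ^ 2) := by
        rw [Gr, G, mul_pow, mul_pow, hs]; ring
    _ ≤ (4 * π * τ)⁻¹ * ((exp (-r * (x - z))) ^ 2 * (exp (-(x - z) ^ 2 / (4 * τ))) ^ 2) := by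
        gcongr
    _ = _ := by rw [he, ← mul_assoc]

lemma integral_Gr_sq_le (r T τ x : ℝ) (hτ : 0 < τ) (hτT : τ ≤ T) (hx : 0 ≤ x) :
    ∫ z in Ioi (0:ℝ), (Gr r τ x z) ^ 2 ≤ exp (2 * r ^ 2 * T) * τ ^ (-(1 / 2) : ℝ) := by
  set g : ℝ → ℝ := fun z => (4 * π * τ)⁻¹ * exp (2 * r ^ 2 * τ) *
      exp (-(1 / (2 * τ)) * (z - (x + 2 * r * τ)) ^ 2) with hg
  have hgi : Integrable g :=
    ((integrable_exp_neg_mul_sq (b := 1 / (2 * τ)) (by positivity)).comp_sub_right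
      (x + 2 * r * τ)).const_mul _
  have hgv : ∫ z, g z = (4 * π * τ)⁻¹ * exp (2 * r ^ 2 * τ) * √(π / (1 / (2 * τ))) := by
    rw [hg, integral_const_mul,
      integral_sub_right_eq_self (fun z : ℝ => exp (-(1 / (2 * τ)) * z ^ 2)), integral_gaussian]
  have h1 : ∫ z in Ioi (0:ℝ), (Gr r τ x z) ^ 2 ≤ ∫ z in Ioi (0:ℝ), g z := by
    apply integral_mono_of_nonneg (ae_of_all _ fun z => sq_nonneg _) hgi.integrableOn
    filter_upwards [ae_restrict_mem measurableSet_Ioi] with z hz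
    exact Gr_sq_le r τ x z hτ hx (le_of_lt hz)
  have h2 : ∫ z in Ioi (0:ℝ), g z ≤ ∫ z, g z :=
    setIntegral_le_integral hgi (ae_of_all _ fun z => by simp only [hg, Pi.zero_apply]; positivity)
  have h3 : (4 * π * τ)⁻¹ * √(π / (1 / (2 * τ))) ≤ τ ^ (-(1 / 2) : ℝ) := by
    rw [rpow_neg hτ.le, ← sqrt_eq_rpow]
    have hle : √(π / (1 / (2 * τ))) ≤ 4 * π * √τ := by
      apply sqrt_le_iff.2 ⟨by positivity, ?_⟩
      rw [mul_pow, sq_sqrt hτ.le]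
      have : π / (1 / (2 * τ)) = 2 * π * τ := by field_simp
      rw [this]
      have := pi_gt_three
      gcongr
      nlinarith
    rw [inv_mul_le_iff₀ (by positivity)]
    refine hle.trans (le_of_eq ?_)
    have : √τ * √τ = τ := mul_self_sqrt hτ.le
    have h0 : √τ ≠ 0 := by positivity
    field_simp
    linarith
  calc ∫ z in Ioi (0:ℝ), (Gr r τ x z) ^ 2
      ≤ exp (2 * r ^ 2 * τ) * ((4 * π * τ)⁻¹ * √(π / (1 / (2 * τ)))) := by
        refine (h1.trans h2).trans (le_of_eq ?_)
        rw [hgv]; ring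
    _ ≤ exp (2 * r ^ 2 * T) * τ ^ (-(1 / 2) : ℝ) := by gcongr

lemma integrableOn_sub_rpow {a s t : ℝ} (ha : -1 < a) (hst : s ≤ t) :
    IntegrableOn (fun u => (t - u) ^ a) (Ioc s t) := by
  rw [← intervalIntegrable_iff_integrableOn_Ioc_of_le hst]
  have h := (intervalIntegral.intervalIntegrable_rpow' (a := t - s) (b := 0) ha).comp_sub_left t
  simpa using h

lemma integral_sub_rpow {a s t : ℝ} (ha : -1 < a) (hst : s ≤ t) :
    ∫ u in Ioc s t, (t - u) ^ a = (t - s) ^ (a + 1) / (a + 1) := by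
  rw [← intervalIntegral.integral_of_le hst,
    intervalIntegral.integral_comp_sub_left (fun u => u ^ a), integral_rpow (Or.inl ha), sub_self,
    zero_rpow (by linarith), sub_zero]

/-- Lemma A.1 (i) of Hambly–Kalsi: time-integrated square bound for `G_r`. -/
theorem stmt_0 (r T p : ℝ) (hT : 0 < T) (hp : 4 < p) :
    ∃ C > (0:ℝ), ∀ s t : ℝ, 0 ≤ s → s ≤ t → t ≤ T → ∀ x ≥ (0:ℝ),
      (∫ u in Ioc s t, (∫ z in Ioi (0:ℝ), (Gr r (t - u) x z) ^ 2) ^ (p / (p - 2)))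
          ^ ((p - 2) / 2)
        ≤ C * |t - s| ^ ((p - 4) / 4) := by
  have hp2 : 0 < p - 2 := by linarith
  have hp4 : 0 < p - 4 := by linarith
  set q := p / (p - 2) with hq
  have hq0 : 0 < q := div_pos (by linarith) hp2
  have ha1 : -(1 / 2) * q + 1 = (p - 4) / (2 * (p - 2)) := by
    rw [hq]; field_simp; ring
  have hb : 0 < -(1 / 2) * q + 1 := by rw [ha1]; positivity
  have ha : -1 < -(1 / 2) * q := by linarith
  set K := exp (2 * r ^ 2 * T) with hK
  have hK0 : 0 < K := exp_pos _
  refine ⟨(K ^ q / (-(1 / 2) * q + 1)) ^ ((p - 2) / 2), by positivity, ?_⟩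
  intro s t hs hst htT x hx
  have hts : 0 ≤ t - s := sub_nonneg.2 hst
  have hin : ∀ u, 0 ≤ ∫ z in Ioi (0:ℝ), (Gr r (t - u) x z) ^ 2 := fun u =>
    integral_nonneg fun z => sq_nonneg _
  have hmain : ∫ u in Ioc s t, (∫ z in Ioi (0:ℝ), (Gr r (t - u) x z) ^ 2) ^ q
      ≤ K ^ q / (-(1 / 2) * q + 1) * (t - s) ^ (-(1 / 2) * q + 1) := by
    calc _ ≤ ∫ u in Ioc s t, K ^ q * (t - u) ^ (-(1 / 2) * q) := by
          apply integral_mono_of_nonneg (ae_of_all _ fun u => rpow_nonneg (hin u) _)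
            ((integrableOn_sub_rpow ha hst).const_mul _)
          -- The endpoint `u = t`, where the kernel degenerates, is a null set.
          filter_upwards [ae_restrict_mem measurableSet_Ioc,
            ae_restrict_of_ae (Measure.ae_ne volume t)] with u hu hut
          have hτ : 0 < t - u := sub_pos.2 (lt_of_le_of_ne hu.2 hut)
          have h := integral_Gr_sq_le r T (t - u) x hτ (by linarith [hu.1]) hx
          refine (rpow_le_rpow (hin u) h hq0.le).trans (le_of_eq ?_)
          rw [mul_rpow hK0.le (by positivity), ← rpow_mul hτ.le]
      _ = _ := by rw [integral_const_mul, integral_sub_rpow ha hst]; ring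
  have hexp : (-(1 / 2) * q + 1) * ((p - 2) / 2) = (p - 4) / 4 := by
    rw [ha1]; field_simp; ring
  refine (rpow_le_rpow (integral_nonneg fun u => rpow_nonneg (hin u) _) hmain
    (by positivity)).trans (le_of_eq ?_)
  rw [mul_rpow (by positivity) (by positivity), ← rpow_mul hts, hexp, abs_of_nonneg hts]
end

section
/- Let r ∈ ℝ, T > 0 and p > 4. Then there exists a constant C = C(r,p,T) > 0 such that for all x, y ≥ 0, sup_{s∈[0,T]} ( ∫_0^s [ ∫_0^∞ |G_r(s−u,x,z) − G_r(s−u,y,z)|² dz ]^{p/(p−2)} du )^{(p−2)/2} ≤ C |x−y|^{(p−4)/2}. -/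
/-!
With `t = s - u`, `h = |x - y|` and `q = p / (p - 2) ∈ (1, 2)`, let `F(t)` be the spatial integral.
For `0 < t ≤ T` it satisfies `F(t) ≤ K t^{-1/2} min(1, h²/t)`. Hence the time integral of `F^q` is at
most a constant times `∫_0^{h²} t^{-q/2} dt + h^{2q} ∫_{h²}^∞ t^{-3q/2} dt`, both terms being
multiples of `h^{2-q}` because `q < 2` and `3q > 2`. Finally `(2 - q)(p - 2)/2 = (p - 4)/2`.

The bound on `F` comes from pointwise estimates. Since `x, z ≥ 0`, the reflected Gaussian, centred
at `-x`, is dominated by the direct one, and the weight `e^{-r(x-z)}` is absorbed into the Gaussian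
by completing the square, at the price of a constant depending on `r` and `T`. This gives
`|G_r| ≤ A t^{-1/2} exp(-(x-z)²/(32t))` (`abs_Gr_le`). For `h² ≤ t`, the mean value theorem and the
same estimate of `∂_x G_r` give `|G_r(t,x,z) - G_r(t,y,z)| ≤ A h t^{-1} exp(-(x-z)²/(32t))`
(`abs_Gr_sub_le`); there the Gaussian at an intermediate point is recentred at `x`, which costs only
a constant because `h ≤ √t`.
-/

open MeasureTheory Real Set Filter

/-- The constant in the pointwise Gaussian bounds for `Gr` and its `x`-derivative, `t ≤ T`. -/
noncomputable def gaussConst (r T : ℝ) : ℝ := Real.exp (4 * r ^ 2 * T + 1) * (|r| * √T + 2)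

lemma gaussConst_pos (r T : ℝ) : 0 < gaussConst r T := by
  unfold gaussConst; positivity

/-- Completing the square: the exponential weight costs half of the Gaussian decay. -/
lemma weight_le (r T t w : ℝ) (ht : 0 < t) (htT : t ≤ T) :
    Real.exp (-r * w) * Real.exp (-w ^ 2 / (8 * t)) ≤
      Real.exp (4 * r ^ 2 * T) * Real.exp (-w ^ 2 / (16 * t)) := by
  rw [← Real.exp_add, ← Real.exp_add, Real.exp_le_exp]
  have h1 : 0 ≤ (w / 4 + 2 * r * t) ^ 2 / t := by positivity
  have h2 : (w / 4 + 2 * r * t) ^ 2 / t = w ^ 2 / (16 * t) + r * w + 4 * r ^ 2 * t := by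
    field_simp; ring
  have h3 : -w ^ 2 / (8 * t) = -w ^ 2 / (16 * t) - w ^ 2 / (16 * t) := by field_simp; ring
  have h4 : r ^ 2 * t ≤ r ^ 2 * T := by gcongr
  linarith

lemma exp_add_le_exp_sub (c t x z : ℝ) (hc : 0 < c) (ht : 0 < t) (hx : 0 ≤ x) (hz : 0 ≤ z) :
    Real.exp (-(x + z) ^ 2 / (c * t)) ≤ Real.exp (-(x - z) ^ 2 / (c * t)) := by
  rw [Real.exp_le_exp]
  refine div_le_div_of_nonneg_right ?_ (by positivity)
  nlinarith [mul_nonneg hx hz]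

/-- The linear factor produced by differentiating a Gaussian costs `t^{-1/2}` and half of the
decay. -/
lemma linear_mul_gauss_le (t a : ℝ) (ht : 0 < t) :
    |a| / (2 * t) * Real.exp (-a ^ 2 / (4 * t)) ≤ (√t)⁻¹ * Real.exp (-a ^ 2 / (8 * t)) := by
  have hs : 0 < √t := Real.sqrt_pos.2 ht
  have hst : √t * √t = t := Real.mul_self_sqrt ht.le
  have h3 : -a ^ 2 / (4 * t) = -a ^ 2 / (8 * t) + -(a ^ 2 / (8 * t)) := by field_simp; ring
  have h1 : |a| / (2 * √t) ≤ Real.exp (a ^ 2 / (8 * t)) := by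
    have h4 := Real.add_one_le_exp (a ^ 2 / (8 * t))
    have h5 : a ^ 2 / (8 * t) = (|a| / (2 * √t)) ^ 2 / 2 := by
      rw [div_pow, mul_pow, sq_abs, Real.sq_sqrt ht.le]; field_simp; norm_num
    nlinarith [sq_nonneg (|a| / (2 * √t) - 1)]
  have h6 : |a| / (2 * t) = (√t)⁻¹ * (|a| / (2 * √t)) := by
    field_simp; rw [Real.sq_sqrt ht.le]
  rw [h6, h3, Real.exp_add, mul_assoc]
  gcongr
  rw [Real.exp_neg]
  calc |a| / (2 * √t) * (Real.exp (-a ^ 2 / (8 * t)) * (Real.exp (a ^ 2 / (8 * t)))⁻¹)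
      ≤ Real.exp (a ^ 2 / (8 * t)) *
        (Real.exp (-a ^ 2 / (8 * t)) * (Real.exp (a ^ 2 / (8 * t)))⁻¹) := by gcongr
    _ = _ := by field_simp

lemma inv_sqrt_four_pi_le (t : ℝ) (ht : 0 < t) : (√(4 * Real.pi * t))⁻¹ ≤ (√t)⁻¹ := by
  have := Real.sqrt_pos.2 ht
  gcongr
  nlinarith [Real.pi_gt_three]

lemma exp_neg_sq_mono (t w : ℝ) (c d : ℝ) (hc : 0 < c) (hcd : c ≤ d) (ht : 0 < t) :
    Real.exp (-w ^ 2 / (c * t)) ≤ Real.exp (-w ^ 2 / (d * t)) := by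
  rw [Real.exp_le_exp, neg_div, neg_div, neg_le_neg_iff]
  gcongr

lemma abs_Gr_le (r T t x z : ℝ) (ht : 0 < t) (htT : t ≤ T) (hx : 0 ≤ x) (hz : 0 ≤ z) :
    |Gr r t x z| ≤ gaussConst r T * (√t)⁻¹ * Real.exp (-(x - z) ^ 2 / (32 * t)) := by
  have h1 := exp_add_le_exp_sub 4 t x z (by norm_num) ht hx hz
  have h2 := weight_le r T t (x - z) ht htT
  have h3 := exp_neg_sq_mono t (x - z) 4 8 (by norm_num) (by norm_num) ht
  have h4 := exp_neg_sq_mono t (x - z) 16 32 (by norm_num) (by norm_num) ht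
  have h5 := inv_sqrt_four_pi_le t ht
  have h6 : Real.exp (4 * r ^ 2 * T) ≤ gaussConst r T := by
    have h7 : Real.exp (4 * r ^ 2 * T) ≤ Real.exp (4 * r ^ 2 * T + 1) :=
      Real.exp_le_exp.2 (by linarith)
    have h8 : 0 ≤ |r| * √T := by positivity
    unfold gaussConst
    nlinarith [Real.exp_pos (4 * r ^ 2 * T + 1)]
  have hE := Real.exp_pos (-(x + z) ^ 2 / (4 * t))
  unfold Gr G
  rw [abs_of_nonneg (mul_nonneg (Real.exp_pos _).le
    (mul_nonneg (by positivity) (sub_nonneg.2 h1)))]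
  calc _ ≤ Real.exp (-r * (x - z)) * ((√t)⁻¹ * Real.exp (-(x - z) ^ 2 / (8 * t))) := by
        have : 0 ≤ Real.exp (-(x - z) ^ 2 / (4 * t)) - Real.exp (-(x + z) ^ 2 / (4 * t)) :=
          sub_nonneg.2 h1
        gcongr
        linarith
    _ = (√t)⁻¹ * (Real.exp (-r * (x - z)) * Real.exp (-(x - z) ^ 2 / (8 * t))) := by ring
    _ ≤ (√t)⁻¹ * (gaussConst r T * Real.exp (-(x - z) ^ 2 / (32 * t))) := by
        refine mul_le_mul_of_nonneg_left (h2.trans ?_) (by positivity)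
        exact mul_le_mul h6 h4 (Real.exp_pos _).le (gaussConst_pos r T).le
    _ = _ := by ring

lemma hasDerivAt_Gr (r t x z : ℝ) (ht : 0 < t) :
    HasDerivAt (fun ξ => Gr r t ξ z)
      ((√(4 * Real.pi * t))⁻¹ * (Real.exp (-r * (x - z)) *
        (-r * (Real.exp (-(x - z) ^ 2 / (4 * t)) - Real.exp (-(x + z) ^ 2 / (4 * t))) +
          (-((x - z) / (2 * t)) * Real.exp (-(x - z) ^ 2 / (4 * t)) +
            (x + z) / (2 * t) * Real.exp (-(x + z) ^ 2 / (4 * t)))))) x := by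
  have hd : HasDerivAt (fun ξ : ℝ => ξ - z) 1 x := (hasDerivAt_id x).sub_const z
  have hd' : HasDerivAt (fun ξ : ℝ => ξ + z) 1 x := (hasDerivAt_id x).add_const z
  have h1 := (hd.const_mul (-r)).exp
  have h2 := ((hd.pow 2).neg.div_const (4 * t)).exp
  have h3 := ((hd'.pow 2).neg.div_const (4 * t)).exp
  have h4 := h1.mul ((h2.sub h3).const_mul (√(4 * Real.pi * t))⁻¹)
  refine HasDerivAt.congr_deriv (f := fun ξ => Gr r t ξ z) h4 ?_
  simp only [Pi.neg_apply, Pi.pow_apply, Pi.sub_apply]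
  field_simp
  ring

/-- Derivative bound, with the Gaussian recentred from `ξ` to a point `x` at distance `≤ √t`. -/
lemma abs_deriv_Gr_le (r T t x ξ z : ℝ) (ht : 0 < t) (htT : t ≤ T) (hξ : 0 ≤ ξ) (hz : 0 ≤ z)
    (hxξ : (x - ξ) ^ 2 ≤ t) :
    |(√(4 * Real.pi * t))⁻¹ * (Real.exp (-r * (ξ - z)) *
        (-r * (Real.exp (-(ξ - z) ^ 2 / (4 * t)) - Real.exp (-(ξ + z) ^ 2 / (4 * t))) +
          (-((ξ - z) / (2 * t)) * Real.exp (-(ξ - z) ^ 2 / (4 * t)) +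
            (ξ + z) / (2 * t) * Real.exp (-(ξ + z) ^ 2 / (4 * t)))))| ≤
      gaussConst r T * t⁻¹ * Real.exp (-(x - z) ^ 2 / (32 * t)) := by
  have h1 := exp_add_le_exp_sub 4 t ξ z (by norm_num) ht hξ hz
  have h1' := exp_add_le_exp_sub 8 t ξ z (by norm_num) ht hξ hz
  have h2 := weight_le r T t (ξ - z) ht htT
  have h3 := exp_neg_sq_mono t (ξ - z) 4 8 (by norm_num) (by norm_num) ht
  have h5 := inv_sqrt_four_pi_le t ht
  have h6 := linear_mul_gauss_le t (ξ - z) ht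
  have h7 := linear_mul_gauss_le t (ξ + z) ht
  have hs : 0 < √t := Real.sqrt_pos.2 ht
  have hsT : √t ≤ √T := Real.sqrt_le_sqrt htT
  have hrec : Real.exp (-(ξ - z) ^ 2 / (16 * t)) ≤
      Real.exp 1 * Real.exp (-(x - z) ^ 2 / (32 * t)) := by
    rw [← Real.exp_add, Real.exp_le_exp, ← sub_nonneg]
    have : 1 + -(x - z) ^ 2 / (32 * t) - -(ξ - z) ^ 2 / (16 * t) =
      (32 * t - (x - z) ^ 2 + 2 * (ξ - z) ^ 2) / (32 * t) := by field_simp; ring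
    rw [this]
    apply div_nonneg _ (by positivity)
    nlinarith [sq_nonneg ((x - ξ) - (ξ - z))]
  set E := Real.exp (-(ξ - z) ^ 2 / (8 * t)) with hE
  have hEpos : 0 < E := Real.exp_pos _
  have hA : |-r * (Real.exp (-(ξ - z) ^ 2 / (4 * t)) - Real.exp (-(ξ + z) ^ 2 / (4 * t)))| ≤
      |r| * E := by
    rw [abs_mul, abs_neg, abs_of_nonneg (sub_nonneg.2 h1)]
    have := Real.exp_pos (-(ξ + z) ^ 2 / (4 * t))
    gcongr
    linarith
  have hB : |-((ξ - z) / (2 * t)) * Real.exp (-(ξ - z) ^ 2 / (4 * t))| ≤ (√t)⁻¹ * E := by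
    rw [abs_mul, abs_neg, abs_div, abs_of_pos (show 0 < 2 * t by positivity), Real.abs_exp]
    exact h6
  have hC : |(ξ + z) / (2 * t) * Real.exp (-(ξ + z) ^ 2 / (4 * t))| ≤ (√t)⁻¹ * E := by
    rw [abs_mul, abs_div, abs_of_pos (show 0 < 2 * t by positivity), Real.abs_exp]
    refine h7.trans ?_
    gcongr
  have hrs : |r| ≤ |r| * √T * (√t)⁻¹ := by
    rw [mul_assoc]
    apply le_mul_of_one_le_right (abs_nonneg _)
    rw [← div_eq_mul_inv, one_le_div hs]
    exact hsT
  have hst : (√t)⁻¹ * (√t)⁻¹ = t⁻¹ := by rw [← mul_inv, Real.mul_self_sqrt ht.le]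
  rw [abs_mul, abs_mul, Real.abs_exp, abs_of_nonneg (show 0 ≤ (√(4 * Real.pi * t))⁻¹ by positivity)]
  calc _ ≤ (√t)⁻¹ * (Real.exp (-r * (ξ - z)) * (|r| * E + ((√t)⁻¹ * E + (√t)⁻¹ * E))) := by
        gcongr
        exact (abs_add_le _ _).trans (add_le_add hA ((abs_add_le _ _).trans (add_le_add hB hC)))
    _ = (√t)⁻¹ * ((|r| + 2 * (√t)⁻¹) * (Real.exp (-r * (ξ - z)) * E)) := by ring
    _ ≤ (√t)⁻¹ * ((|r| * √T * (√t)⁻¹ + 2 * (√t)⁻¹) * (Real.exp (4 * r ^ 2 * T) *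
          (Real.exp 1 * Real.exp (-(x - z) ^ 2 / (32 * t))))) := by
        refine mul_le_mul_of_nonneg_left ?_ (by positivity)
        exact mul_le_mul (by linarith) (h2.trans (by gcongr)) (by positivity) (by positivity)
    _ = _ := by
        unfold gaussConst
        rw [Real.exp_add, ← hst]; ring

lemma abs_Gr_sub_le (r T t x y z : ℝ) (ht : 0 < t) (htT : t ≤ T) (hx : 0 ≤ x) (hy : 0 ≤ y)
    (hz : 0 ≤ z) (hxy : (x - y) ^ 2 ≤ t) :
    |Gr r t x z - Gr r t y z| ≤
      gaussConst r T * t⁻¹ * Real.exp (-(x - z) ^ 2 / (32 * t)) * |x - y| := by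
  have key := (convex_uIcc x y).norm_image_sub_le_of_norm_hasDerivWithin_le
    (f := fun ξ => Gr r t ξ z) (C := gaussConst r T * t⁻¹ * Real.exp (-(x - z) ^ 2 / (32 * t)))
    (fun ξ _ => (hasDerivAt_Gr r t ξ z ht).hasDerivWithinAt)
    (fun ξ hξ => ?_) right_mem_uIcc left_mem_uIcc
  · simpa [Real.norm_eq_abs] using key
  · have h0 : 0 ≤ ξ := (le_min hx hy).trans hξ.1
    have h1 : |x - ξ| ≤ |x - y| := by
      rw [abs_sub_comm x ξ, abs_sub_comm x y]
      exact abs_sub_left_of_mem_uIcc hξ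
    exact abs_deriv_Gr_le r T t x ξ z ht htT h0 hz ((sq_le_sq.2 h1).trans hxy)

/-- A pointwise bound by Gaussians centred at `x` and `y` becomes an `L²` bound; it serves both the
regime `|x - y|² ≤ t` and the regime `|x - y|² > t`. -/
lemma integral_le_of_gauss (f : ℝ → ℝ) (D t x y : ℝ) (ht : 0 < t)
    (hf : ∀ z > 0, |f z| ^ 2 ≤ D *
      (Real.exp (-(x - z) ^ 2 / (16 * t)) + Real.exp (-(y - z) ^ 2 / (16 * t)))) (hD : 0 ≤ D) :
    ∫ z in Ioi (0:ℝ), |f z| ^ 2 ≤ D * (16 * √t) := by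
  have hb : 0 < 1 / (16 * t) := by positivity
  have hfun : ∀ a : ℝ, (fun z => Real.exp (-(a - z) ^ 2 / (16 * t))) =
      fun z => (fun w => Real.exp (-(1 / (16 * t)) * w ^ 2)) (a - z) := by
    intro a; ext z; simp only; congr 1; field_simp
  have hi : ∀ a : ℝ, Integrable (fun z => Real.exp (-(a - z) ^ 2 / (16 * t))) := by
    intro a; rw [hfun]; exact (integrable_exp_neg_mul_sq hb).comp_sub_left a
  have hv : ∀ a : ℝ, ∫ z, Real.exp (-(a - z) ^ 2 / (16 * t)) ≤ 8 * √t := by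
    intro a
    rw [hfun, integral_sub_left_eq_self (fun w => Real.exp (-(1 / (16 * t)) * w ^ 2)),
      integral_gaussian]
    rw [show Real.pi / (1 / (16 * t)) = (16 * Real.pi) * t by field_simp,
      Real.sqrt_mul (by positivity)]
    gcongr
    rw [Real.sqrt_le_left (by norm_num)]
    nlinarith [Real.pi_lt_four]
  have hI := ((hi x).add (hi y)).const_mul D
  calc _ ≤ ∫ z in Ioi (0:ℝ), D *
        (Real.exp (-(x - z) ^ 2 / (16 * t)) + Real.exp (-(y - z) ^ 2 / (16 * t))) := by
        apply integral_mono_of_nonneg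
        · exact Eventually.of_forall fun z => by positivity
        · exact hI.integrableOn
        · exact (ae_restrict_iff' measurableSet_Ioi).2 (Eventually.of_forall fun z hz => hf z hz)
    _ ≤ ∫ z, D *
        (Real.exp (-(x - z) ^ 2 / (16 * t)) + Real.exp (-(y - z) ^ 2 / (16 * t))) := by
        apply setIntegral_le_integral hI
        exact Eventually.of_forall fun z => mul_nonneg hD (add_nonneg (Real.exp_pos _).le (Real.exp_pos _).le)
    _ ≤ D * (16 * √t) := by
        rw [integral_const_mul, integral_add (hi x) (hi y)]
        gcongr
        linarith [hv x, hv y]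

lemma gauss_sq (t w : ℝ) :
    Real.exp (-w ^ 2 / (32 * t)) ^ 2 = Real.exp (-w ^ 2 / (16 * t)) := by
  rw [← Real.exp_nat_mul]; congr 1; push_cast
  rcases eq_or_ne t 0 with rfl | h
  · simp
  · field_simp; ring

lemma spatial_le_far (r T t x y : ℝ) (ht : 0 < t) (htT : t ≤ T) (hx : 0 ≤ x) (hy : 0 ≤ y) :
    ∫ z in Ioi (0:ℝ), |Gr r t x z - Gr r t y z| ^ 2 ≤
      32 * gaussConst r T ^ 2 * t ^ (-1 / 2 : ℝ) := by
  have hst : √t * √t = t := Real.mul_self_sqrt ht.le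
  have hs : 0 < √t := Real.sqrt_pos.2 ht
  have := integral_le_of_gauss (fun z => Gr r t x z - Gr r t y z)
    (2 * gaussConst r T ^ 2 * t⁻¹) t x y ht (fun z hz => ?_) (by positivity)
  · refine this.trans_eq ?_
    rw [show (-1 / 2 : ℝ) = -(1 / 2) by norm_num, Real.rpow_neg ht.le, ← Real.sqrt_eq_rpow]
    nth_rewrite 1 [← hst]
    field_simp
    ring
  · have hz' : (0:ℝ) ≤ z := le_of_lt hz
    have h1 := pow_le_pow_left₀ (abs_nonneg _) (abs_Gr_le r T t x z ht htT hx hz') 2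
    have h2 := pow_le_pow_left₀ (abs_nonneg _) (abs_Gr_le r T t y z ht htT hy hz') 2
    rw [mul_pow, mul_pow, gauss_sq, inv_pow, Real.sq_sqrt ht.le, sq_abs] at h1 h2
    rw [sq_abs]
    nlinarith [sq_nonneg (Gr r t x z + Gr r t y z)]

lemma spatial_le_near (r T t x y : ℝ) (ht : 0 < t) (htT : t ≤ T) (hx : 0 ≤ x) (hy : 0 ≤ y)
    (hxy : (x - y) ^ 2 ≤ t) :
    ∫ z in Ioi (0:ℝ), |Gr r t x z - Gr r t y z| ^ 2 ≤
      32 * gaussConst r T ^ 2 * ((x - y) ^ 2 * t ^ (-3 / 2 : ℝ)) := by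
  have hst : √t * √t = t := Real.mul_self_sqrt ht.le
  have hs : 0 < √t := Real.sqrt_pos.2 ht
  have := integral_le_of_gauss (fun z => Gr r t x z - Gr r t y z)
    (2 * gaussConst r T ^ 2 * (t⁻¹) ^ 2 * (x - y) ^ 2) t x y ht (fun z hz => ?_) (by positivity)
  · refine this.trans_eq ?_
    have h1 : t ^ (-3 / 2 : ℝ) = t⁻¹ ^ 2 * √t := by
      rw [show (-3 / 2 : ℝ) = (-2 : ℤ) + 1 / 2 by norm_num, Real.rpow_add ht,
        ← Real.sqrt_eq_rpow, Real.rpow_intCast]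
      simp [zpow_neg]
    rw [h1]
    ring
  · have hz' : (0:ℝ) ≤ z := le_of_lt hz
    have h1 := pow_le_pow_left₀ (abs_nonneg _) (abs_Gr_sub_le r T t x y z ht htT hx hy hz' hxy) 2
    rw [mul_pow, mul_pow, mul_pow, gauss_sq, sq_abs (x - y)] at h1
    refine h1.trans ?_
    have h2 := Real.exp_pos (-(x - z) ^ 2 / (16 * t))
    have h3 := Real.exp_pos (-(y - z) ^ 2 / (16 * t))
    have h4 : 0 ≤ gaussConst r T ^ 2 * (t⁻¹) ^ 2 * (x - y) ^ 2 := by positivity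
    nlinarith [mul_nonneg h4 h2.le, mul_nonneg h4 h3.le]

/-- Majorant in time of the spatial integral to the power `q`, for `h = |x-y|` (up to a constant):
`t^{-q/2}` for `0 < t ≤ h²` and `h^{2q} t^{-3q/2}` beyond. -/
noncomputable def timeBound (q h t : ℝ) : ℝ :=
  (Ioc 0 (h ^ 2)).indicator (fun t => t ^ (-(q / 2))) t +
    (Ioi (h ^ 2)).indicator (fun t => h ^ (2 * q) * t ^ (-(3 * q / 2))) t

lemma timeBound_nonneg (q h t : ℝ) (hh : 0 < h) : 0 ≤ timeBound q h t := by
  unfold timeBound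
  apply add_nonneg
  · exact indicator_nonneg (fun t ht => Real.rpow_nonneg ht.1.le _) t
  · refine indicator_nonneg (fun t ht => ?_) t
    have : 0 < t := (by positivity : 0 < h ^ 2).trans ht
    positivity

lemma timeBound_integral (q h : ℝ) (hq : 1 < q) (hq2 : q < 2) (hh : 0 < h) :
    Integrable (timeBound q h) ∧
      ∫ t, timeBound q h t = (1 / (1 - q / 2) + 1 / (3 * q / 2 - 1)) * h ^ (2 - q) := by
  have hh2 : 0 < h ^ 2 := by positivity
  have i1 : IntegrableOn (fun t : ℝ => t ^ (-(q / 2))) (Ioc 0 (h ^ 2)) := by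
    rw [← intervalIntegrable_iff_integrableOn_Ioc_of_le hh2.le]
    exact intervalIntegral.intervalIntegrable_rpow' (by linarith)
  have i2 : IntegrableOn (fun t : ℝ => h ^ (2 * q) * t ^ (-(3 * q / 2))) (Ioi (h ^ 2)) :=
    (integrableOn_Ioi_rpow_of_lt (by linarith) hh2).const_mul _
  have j1 := i1.integrable_indicator measurableSet_Ioc
  have j2 := i2.integrable_indicator measurableSet_Ioi
  refine ⟨j1.add j2, ?_⟩
  unfold timeBound
  rw [integral_add j1 j2, integral_indicator measurableSet_Ioc, integral_indicator measurableSet_Ioi,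
    integral_const_mul, integral_Ioi_rpow_of_lt (by linarith) hh2,
    ← intervalIntegral.integral_of_le hh2.le, integral_rpow (Or.inl (by linarith)),
    Real.zero_rpow (by linarith), sub_zero, ← Real.rpow_natCast, ← Real.rpow_mul hh.le,
    ← Real.rpow_mul hh.le]
  have e1 : ((2:ℕ):ℝ) * (-(q / 2) + 1) = 2 - q := by push_cast; ring
  have e2 : h ^ (((2:ℕ):ℝ) * (-(3 * q / 2) + 1)) = h ^ (2 - q) / h ^ (2 * q) := by
    rw [← Real.rpow_sub hh]; congr 1; push_cast; ring
  have e3 : h ^ (2 * q) ≠ 0 := (Real.rpow_pos_of_pos hh _).ne'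
  have e4 : (1 - q / 2) ≠ 0 := by linarith
  have e5 : (3 * q / 2 - 1) ≠ 0 := by linarith
  have e6 : -(3 * q / 2) + 1 = -(3 * q / 2 - 1) := by ring
  rw [e1, e2, e6, show -(q / 2) + 1 = 1 - q / 2 by ring, div_neg]
  generalize 3 * q / 2 - 1 = b at *
  generalize 1 - q / 2 = a at *
  field_simp

lemma spatial_rpow_le (r T q t x y : ℝ) (hq : 1 < q) (ht : 0 ≤ t) (htT : t ≤ T) (hx : 0 ≤ x)
    (hy : 0 ≤ y) (hxy : x ≠ y) :
    (∫ z in Ioi (0:ℝ), |Gr r t x z - Gr r t y z| ^ 2) ^ q ≤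
      (32 * gaussConst r T ^ 2) ^ q * timeBound q |x - y| t := by
  have hh : 0 < |x - y| := abs_pos.2 (sub_ne_zero.2 hxy)
  have hK : 0 < 32 * gaussConst r T ^ 2 := by have := gaussConst_pos r T; positivity
  have hF : 0 ≤ ∫ z in Ioi (0:ℝ), |Gr r t x z - Gr r t y z| ^ 2 :=
    integral_nonneg fun z => by positivity
  rcases ht.eq_or_lt with rfl | ht
  -- at `t = 0` the kernel takes the junk value `0`
  · have : (∫ z in Ioi (0:ℝ), |Gr r 0 x z - Gr r 0 y z| ^ 2) = 0 := by simp [Gr, G]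
    rw [this, Real.zero_rpow (by linarith)]
    exact mul_nonneg (by positivity) (timeBound_nonneg _ _ _ hh)
  · rcases le_or_gt t (|x - y| ^ 2) with h | h
    · have hb : timeBound q |x - y| t = (t ^ (-1 / 2 : ℝ)) ^ q := by
        have h1 : t ∈ Ioc 0 (|x - y| ^ 2) := ⟨ht, h⟩
        have h2 : t ∉ Ioi (|x - y| ^ 2) := not_lt.2 h
        rw [timeBound, indicator_of_mem h1, indicator_of_notMem h2, ← Real.rpow_mul ht.le, add_zero]
        congr 1; ring
      rw [hb, ← Real.mul_rpow hK.le (by positivity)]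
      exact Real.rpow_le_rpow hF (spatial_le_far r T t x y ht htT hx hy) (by linarith)
    · have hb : timeBound q |x - y| t = ((x - y) ^ 2 * t ^ (-3 / 2 : ℝ)) ^ q := by
        have h1 : t ∉ Ioc 0 (|x - y| ^ 2) := fun h' => absurd h'.2 (not_le.2 h)
        have h2 : t ∈ Ioi (|x - y| ^ 2) := h
        rw [timeBound, indicator_of_mem h2, indicator_of_notMem h1,
          Real.mul_rpow (by positivity) (by positivity), ← Real.rpow_mul ht.le, zero_add,
          ← sq_abs (x - y), ← Real.rpow_natCast, ← Real.rpow_mul hh.le]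
        congr 2; ring
      rw [hb, ← Real.mul_rpow hK.le (by positivity)]
      rw [sq_abs] at h
      exact Real.rpow_le_rpow hF (spatial_le_near r T t x y ht htT hx hy h.le) (by linarith)

/-- Lemma A.1 (iii) of Hambly–Kalsi: space-increment bound for `G_r`. -/
theorem stmt_2 (r T p : ℝ) (hT : 0 < T) (hp : 4 < p) :
    ∃ C > (0:ℝ), ∀ x ≥ (0:ℝ), ∀ y ≥ (0:ℝ), ∀ s ∈ Icc (0:ℝ) T,
      (∫ u in Ioc (0:ℝ) s,
          (∫ z in Ioi (0:ℝ), |Gr r (s - u) x z - Gr r (s - u) y z| ^ 2) ^ (p / (p - 2)))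
          ^ ((p - 2) / 2)
        ≤ C * |x - y| ^ ((p - 4) / 2) := by
  have hp2 : 0 < p - 2 := by linarith
  set q := p / (p - 2) with hq
  have hq1 : 1 < q := by rw [hq, one_lt_div hp2]; linarith
  have hq2 : q < 2 := by rw [hq, div_lt_iff₀ hp2]; linarith
  have hK : 0 < (32 * gaussConst r T ^ 2) ^ q := by have := gaussConst_pos r T; positivity
  have hM : 0 < 1 / (1 - q / 2) + 1 / (3 * q / 2 - 1) := by
    have h1 : 0 < 1 - q / 2 := by linarith
    have h2 : 0 < 3 * q / 2 - 1 := by linarith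
    positivity
  set K := (32 * gaussConst r T ^ 2) ^ q
  set M := 1 / (1 - q / 2) + 1 / (3 * q / 2 - 1)
  refine ⟨(K * M) ^ ((p - 2) / 2), by positivity, fun x hx y hy s hs => ?_⟩
  rcases eq_or_ne x y with rfl | hxy
  · simp only [sub_self, abs_zero, ne_eq, OfNat.ofNat_ne_zero, not_false_eq_true, zero_pow,
      integral_zero]
    rw [Real.zero_rpow (by linarith : q ≠ 0), integral_zero, Real.zero_rpow (by linarith)]
    positivity
  have hh : 0 < |x - y| := abs_pos.2 (sub_ne_zero.2 hxy)
  obtain ⟨hI, hV⟩ := timeBound_integral q |x - y| hq1 hq2 hh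
  have hI' : Integrable (fun u => K * timeBound q |x - y| (s - u)) :=
    (hI.comp_sub_left s).const_mul K
  have hnn : ∀ u, 0 ≤ (∫ z in Ioi (0:ℝ), |Gr r (s - u) x z - Gr r (s - u) y z| ^ 2) ^ q :=
    fun u => Real.rpow_nonneg (integral_nonneg fun z => by positivity) _
  have hmain : ∫ u in Ioc (0:ℝ) s,
      (∫ z in Ioi (0:ℝ), |Gr r (s - u) x z - Gr r (s - u) y z| ^ 2) ^ q ≤
      K * M * |x - y| ^ (2 - q) := by
    calc _ ≤ ∫ u in Ioc (0:ℝ) s, K * timeBound q |x - y| (s - u) := by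
          apply integral_mono_of_nonneg (Eventually.of_forall hnn) hI'.integrableOn
          refine (ae_restrict_iff' measurableSet_Ioc).2 (Eventually.of_forall fun u hu => ?_)
          exact spatial_rpow_le r T q (s - u) x y hq1 (by linarith [hu.2])
            (by linarith [hu.1, hs.2]) hx hy hxy
      _ ≤ ∫ u, K * timeBound q |x - y| (s - u) :=
          setIntegral_le_integral hI'
            (Eventually.of_forall fun u => mul_nonneg hK.le (timeBound_nonneg _ _ _ hh))
      _ = K * M * |x - y| ^ (2 - q) := by
          rw [integral_const_mul, integral_sub_left_eq_self (timeBound q |x - y|), hV, mul_assoc]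
  refine (Real.rpow_le_rpow (integral_nonneg hnn) hmain (by linarith)).trans_eq ?_
  rw [Real.mul_rpow (by positivity) (by positivity), ← Real.rpow_mul hh.le]
  congr 2
  rw [hq]; field_simp; ring
end

section
/- Let r ∈ ℝ and T > 0. Then there exists a constant C = C(r,T) > 0 such that for every measurable u : [0,T]×[0,∞) → ℝ with ∫_0^T ‖u(s,·)‖_{L_r} ds < ∞ and every t ∈ [0,T], sup_{τ∈[0,t]} sup_{x≥0} | e^{−rx} ∫_0^τ ∫_0^∞ G(τ−s,x,y) u(s,y) dy ds | ≤ C ∫_0^t ‖u(s,·)‖_{L_r} ds. -/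
/-!
Multiplying by the weight turns the kernel into `e^{-r(x-y)} G(t,x,y)`. Since `0 ≤ G` is at most the
free Gaussian kernel on `x, y ≥ 0`, completing the square bounds the weighted kernel by `e^{r²t}`
times the density in `y` of the normal law with mean `x + 2rt` and variance `2t`
(`weighted_kernel_le`). That density has total mass one, so the inner integral is at most
`e^{r²(τ-s)} ‖u(s,·)‖_{L_r}` (`inner_bound`), and integrating over `s` gives the claim with
`C = e^{r²T}`.
-/

open MeasureTheory Real Set Filter

lemma LrNorm_nonneg (r : ℝ) (v : ℝ → ℝ) : 0 ≤ LrNorm r v := by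
  apply Real.sSup_nonneg
  rintro _ ⟨x, -, rfl⟩
  positivity

lemma abs_le_LrNorm {r : ℝ} {v : ℝ → ℝ}
    (hv : BddAbove ((fun x => Real.exp (-r * x) * |v x|) '' Ici 0)) {y : ℝ} (hy : 0 ≤ y) :
    |v y| ≤ Real.exp (r * y) * LrNorm r v := by
  have h : Real.exp (-r * y) * |v y| ≤ LrNorm r v := le_csSup hv ⟨y, hy, rfl⟩
  calc |v y| = Real.exp (r * y) * (Real.exp (-r * y) * |v y|) := by
        rw [← mul_assoc, ← Real.exp_add]; simp
    _ ≤ _ := by gcongr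

/-- Completing the square: `-(x-y)²/(4t) - r(x-y) = r²t - (y-(x+2rt))²/(4t)`. -/
lemma weighted_kernel_le (r : ℝ) {t x y : ℝ} (ht : 0 < t) (hx : 0 ≤ x) (hy : 0 ≤ y) :
    Real.exp (-r * x) * (|G t x y| * Real.exp (r * y)) ≤
      Real.exp (r ^ 2 * t) *
        ProbabilityTheory.gaussianPDFReal (x + 2 * r * t) (2 * t).toNNReal y := by
  have h1 : Real.exp (-(x + y) ^ 2 / (4 * t)) ≤ Real.exp (-(x - y) ^ 2 / (4 * t)) := by
    apply Real.exp_le_exp.2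
    gcongr 1
    nlinarith [mul_nonneg hx hy]
  have h2 : |G t x y| ≤ (√(4 * π * t))⁻¹ * Real.exp (-(x - y) ^ 2 / (4 * t)) := by
    unfold G
    rw [abs_of_nonneg (mul_nonneg (by positivity) (sub_nonneg.2 h1))]
    gcongr
    linarith [Real.exp_pos (-(x + y) ^ 2 / (4 * t))]
  refine (mul_le_mul_of_nonneg_left (mul_le_mul_of_nonneg_right h2 (by positivity))
    (by positivity)).trans_eq ?_
  have h3 : Real.exp (-r * x) * Real.exp (-(x - y) ^ 2 / (4 * t)) * Real.exp (r * y) =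
      Real.exp (r ^ 2 * t) * Real.exp (-(y - (x + 2 * r * t)) ^ 2 / (2 * (2 * t))) := by
    rw [← Real.exp_add, ← Real.exp_add, ← Real.exp_add]
    congr 1
    field_simp
    ring
  rw [ProbabilityTheory.gaussianPDFReal, Real.coe_toNNReal _ (by positivity),
    show 2 * π * (2 * t) = 4 * π * t by ring]
  linear_combination (√(4 * π * t))⁻¹ * h3

lemma inner_bound (r : ℝ) {t x : ℝ} (ht : 0 ≤ t) (hx : 0 ≤ x) {v : ℝ → ℝ}
    (hv : BddAbove ((fun x => Real.exp (-r * x) * |v x|) '' Ici 0)) :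
    |Real.exp (-r * x) * ∫ y in Ioi (0:ℝ), G t x y * v y| ≤
      Real.exp (r ^ 2 * t) * LrNorm r v := by
  have hN := LrNorm_nonneg r v
  rcases ht.eq_or_lt with rfl | ht
  · -- `G 0 x y = 0`, because the prefactor is `(√0)⁻¹ = 0`.
    simpa [G] using hN
  set g := ProbabilityTheory.gaussianPDFReal (x + 2 * r * t) (2 * t).toNNReal with hg
  have hgi : Integrable g := ProbabilityTheory.integrable_gaussianPDFReal _ _
  rw [← integral_const_mul, ← Real.norm_eq_abs]
  calc _ ≤ ∫ y in Ioi (0:ℝ), Real.exp (r ^ 2 * t) * LrNorm r v * g y := by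
        apply norm_integral_le_of_norm_le (hgi.const_mul _).integrableOn
        refine (ae_restrict_iff' measurableSet_Ioi).2 (.of_forall fun y hy => ?_)
        have hy0 : 0 ≤ y := le_of_lt hy
        rw [Real.norm_eq_abs, abs_mul, abs_mul, abs_of_pos (Real.exp_pos _)]
        calc _ ≤ Real.exp (-r * x) * (|G t x y| * (Real.exp (r * y) * LrNorm r v)) := by
              gcongr; exact abs_le_LrNorm hv hy0
          _ = Real.exp (-r * x) * (|G t x y| * Real.exp (r * y)) * LrNorm r v := by ring
          _ ≤ Real.exp (r ^ 2 * t) * g y * LrNorm r v := by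
              exact mul_le_mul_of_nonneg_right (weighted_kernel_le r ht hx hy0) hN
          _ = _ := by ring
    _ ≤ ∫ y, Real.exp (r ^ 2 * t) * LrNorm r v * g y := by
        refine setIntegral_le_integral (hgi.const_mul _) (.of_forall fun y => ?_)
        have := ProbabilityTheory.gaussianPDFReal_nonneg (x + 2 * r * t) (2 * t).toNNReal y
        simp only [Pi.zero_apply]
        positivity
    _ = _ := by
        rw [integral_const_mul, hg, ProbabilityTheory.integral_gaussianPDFReal_eq_one, mul_one]
        simpa using ht

/-- Lemma 4.5 of Hambly–Kalsi: weighted sup bound for the heat convolution. -/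
theorem stmt_3 (r T : ℝ) (hT : 0 < T) :
    ∃ C > (0:ℝ), ∀ u : ℝ → ℝ → ℝ,
      Measurable (Function.uncurry u) →
      (∀ s ∈ Icc (0:ℝ) T, BddAbove ((fun x => Real.exp (-r * x) * |u s x|) '' Ici 0)) →
      IntegrableOn (fun s => LrNorm r (u s)) (Icc 0 T) →
      ∀ t ∈ Icc (0:ℝ) T, ∀ τ ∈ Icc (0:ℝ) t, ∀ x ≥ (0:ℝ),
        |Real.exp (-r * x) *
            ∫ s in Ioc (0:ℝ) τ, ∫ y in Ioi (0:ℝ), G (τ - s) x y * u s y|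
          ≤ C * ∫ s in Ioc (0:ℝ) t, LrNorm r (u s) := by
  refine ⟨Real.exp (r ^ 2 * T), Real.exp_pos _, ?_⟩
  intro u _ hb hi t ht τ hτ x hx
  have hit : IntegrableOn (fun s => LrNorm r (u s)) (Ioc 0 t) :=
    hi.mono_set fun s hs => ⟨hs.1.le, hs.2.trans ht.2⟩
  have hsub : Ioc (0:ℝ) τ ⊆ Ioc 0 t := Ioc_subset_Ioc_right hτ.2
  rw [← integral_const_mul, ← integral_const_mul, ← Real.norm_eq_abs]
  calc _ ≤ ∫ s in Ioc (0:ℝ) τ, Real.exp (r ^ 2 * T) * LrNorm r (u s) := by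
        apply norm_integral_le_of_norm_le ((hit.mono_set hsub).const_mul _)
        refine (ae_restrict_iff' measurableSet_Ioc).2 (.of_forall fun s hs => ?_)
        have hsT : s ≤ T := hs.2.trans (hτ.2.trans ht.2)
        refine (inner_bound r (sub_nonneg.2 hs.2) hx (hb s ⟨hs.1.le, hsT⟩)).trans ?_
        have hN := LrNorm_nonneg r (u s)
        gcongr
        linarith [hs.1, hτ.2, ht.2]
    _ ≤ _ := by
        refine setIntegral_mono_set (hit.const_mul _) (.of_forall fun s => ?_)
          hsub.eventuallyLE
        exact mul_nonneg (Real.exp_pos _).le (LrNorm_nonneg r (u s))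
end

section
/- Let r ∈ ℝ and T > 0. Then there exists a constant C = C(r,T) > 0 such that for every continuous u₀ : [0,∞) → ℝ with ‖u₀‖_{L_r} < ∞, sup_{t∈(0,T]} sup_{x≥0} e^{−rx} | ∫_0^∞ G(t,x,y) u₀(y) dy | ≤ C ‖u₀‖_{L_r}. -/
/-!
On `x, y ≥ 0` the reflected Gaussian is at most the direct one, so `0 ≤ G t x y` is bounded by the
free heat kernel, while `|u₀ y| ≤ e^{ry} ‖u₀‖_{L_r}`. Completing the square,
`-(x-y)²/(4t) + ry = rx + r²t - (y - (x + 2rt))²/(4t)`, so the integrand is dominated by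
`e^{rx} e^{r²t} ‖u₀‖_{L_r}` times a normalised Gaussian centred at `x + 2rt`, whose integral over
the half-line is at most `1`. Hence `C = e^{r²T}` works.
-/

open MeasureTheory Real Set Filter

/-- The Dirichlet heat kernel is dominated by the free heat kernel on the quadrant. -/
lemma abs_G_le {t x y : ℝ} (ht : 0 < t) (hx : 0 ≤ x) (hy : 0 ≤ y) :
    |G t x y| ≤ (√(4 * π * t))⁻¹ * exp (-(x - y) ^ 2 / (4 * t)) := by
  have h : exp (-(x + y) ^ 2 / (4 * t)) ≤ exp (-(x - y) ^ 2 / (4 * t)) := by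
    apply exp_le_exp.mpr
    apply div_le_div_of_nonneg_right _ (by positivity)
    nlinarith [mul_nonneg hx hy]
  unfold G
  rw [abs_of_nonneg (mul_nonneg (by positivity) (sub_nonneg.mpr h))]
  apply mul_le_mul_of_nonneg_left _ (by positivity)
  linarith [exp_pos (-(x + y) ^ 2 / (4 * t))]

lemma abs_le_exp_mul_LrNorm {r : ℝ} {v : ℝ → ℝ}
    (hv : BddAbove ((fun x => exp (-r * x) * |v x|) '' Ici 0)) {y : ℝ} (hy : 0 ≤ y) :
    |v y| ≤ exp (r * y) * LrNorm r v := by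
  have h : exp (-r * y) * |v y| ≤ LrNorm r v := le_csSup hv ⟨y, hy, rfl⟩
  calc |v y| = exp (r * y) * (exp (-r * y) * |v y|) := by
        rw [← mul_assoc, ← exp_add]; simp
    _ ≤ _ := mul_le_mul_of_nonneg_left h (exp_pos _).le

/-- weighted sup bound for the heat semigroup acting on the initial condition. -/
theorem stmt_5 (r T : ℝ) (hT : 0 < T) :
    ∃ C > (0:ℝ), ∀ u₀ : ℝ → ℝ,
      ContinuousOn u₀ (Ici 0) →
      BddAbove ((fun x => Real.exp (-r * x) * |u₀ x|) '' Ici 0) →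
      ∀ t ∈ Ioc (0:ℝ) T, ∀ x ≥ (0:ℝ),
        Real.exp (-r * x) * |∫ y in Ioi (0:ℝ), G t x y * u₀ y|
          ≤ C * LrNorm r u₀ := by
  refine ⟨exp (r ^ 2 * T), exp_pos _, fun u₀ _ hb t ⟨ht, htT⟩ x hx => ?_⟩
  have hM : 0 ≤ LrNorm r u₀ := by
    have h := (abs_nonneg _).trans (abs_le_exp_mul_LrNorm hb le_rfl)
    simpa using h
  set M := LrNorm r u₀
  have hs : 0 < √(4 * π * t) := sqrt_pos.mpr (by positivity)
  set K : ℝ := (√(4 * π * t))⁻¹ * (exp (r * x) * exp (r ^ 2 * t) * M) with hK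
  let g : ℝ → ℝ := fun y => K * exp (-(1 / (4 * t)) * (y - (x + 2 * r * t)) ^ 2)
  have hg0 : ∀ y, 0 ≤ g y := fun y => by positivity
  have hgi : Integrable g :=
    ((integrable_exp_neg_mul_sq (b := 1 / (4 * t)) (by positivity)).comp_sub_right
      (x + 2 * r * t)).const_mul K
  have hgint : ∫ y, g y = exp (r * x) * exp (r ^ 2 * t) * M := by
    have h := integral_sub_right_eq_self (μ := volume)
      (fun y : ℝ => exp (-(1 / (4 * t)) * y ^ 2)) (x + 2 * r * t)
    rw [integral_const_mul, h, integral_gaussian,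
      show π / (1 / (4 * t)) = 4 * π * t by field_simp, hK]
    field_simp
  have hle : ∀ y ∈ Ioi (0:ℝ), ‖G t x y * u₀ y‖ ≤ g y := by
    intro y hy
    have hy' : 0 ≤ y := le_of_lt hy
    have hsq : exp (-(x - y) ^ 2 / (4 * t)) * exp (r * y)
        = exp (r * x) * exp (r ^ 2 * t)
          * exp (-(1 / (4 * t)) * (y - (x + 2 * r * t)) ^ 2) := by
      simp only [← exp_add]
      congr 1
      field_simp
      ring
    rw [norm_mul, norm_eq_abs, norm_eq_abs]
    calc |G t x y| * |u₀ y|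
        ≤ ((√(4 * π * t))⁻¹ * exp (-(x - y) ^ 2 / (4 * t))) * (exp (r * y) * M) :=
          mul_le_mul (abs_G_le ht hx hy') (abs_le_exp_mul_LrNorm hb hy') (abs_nonneg _)
            (by positivity)
      _ = (√(4 * π * t))⁻¹ * (exp (-(x - y) ^ 2 / (4 * t)) * exp (r * y)) * M := by ring
      _ = g y := by rw [hsq]; simp only [g, hK]; ring
  have hI : |∫ y in Ioi (0:ℝ), G t x y * u₀ y| ≤ exp (r * x) * exp (r ^ 2 * t) * M := by
    rw [← hgint, ← norm_eq_abs]
    exact (norm_integral_le_of_norm_le hgi.integrableOn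
      ((ae_restrict_iff' measurableSet_Ioi).mpr (ae_of_all _ hle))).trans
      (setIntegral_le_integral hgi (ae_of_all _ hg0))
  calc exp (-r * x) * |∫ y in Ioi (0:ℝ), G t x y * u₀ y|
      ≤ exp (-r * x) * (exp (r * x) * exp (r ^ 2 * t) * M) :=
        mul_le_mul_of_nonneg_left hI (exp_pos _).le
    _ = exp (r ^ 2 * t) * M := by
        rw [← mul_assoc, ← mul_assoc, ← exp_add]; simp
    _ ≤ exp (r ^ 2 * T) * M := by gcongr
end

section
/- Let r ∈ ℝ and T > 0. Then there exists a constant C = C(r,T) > 0 such that whenever v₁, v₂ : [0,T]×[0,∞) → ℝ are continuous obstacles with ‖vᵢ‖_{C_r^T} < ∞, vᵢ(t,0) = 0 for every t ∈ [0,T] and vᵢ(0,·) ≤ 0 (i = 1,2), and (z₁,η₁), (z₂,η₂) are the corresponding solutions of the deterministic obstacle problem, then ‖z₁ − z₂‖_{C_r^T} ≤ C ‖v₁ − v₂‖_{C_r^T}. -/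
/-!
The constant is `C = e^{r²T}`. With `M = ‖v₁ - v₂‖`, the function `M e^{rx + r²t}` solves the heat
equation and dominates `|v₁ - v₂|`. Adding `ε e^{Rx + (R²+1)t}` with `R = |r| + 1` gives a strict
supersolution `Φ` that beats the growth `e^{rx}` of the solutions at infinity. It is enough to show
`z₁ - z₂ ≤ Φ` (`comparison`), to let `ε → 0` (`comparison_limit`) and to exchange the indices.

Where `z₁ > z₂ + Φ` one has `z₁ > v₂ + Φ ≥ v₁`, so `η₁` does not charge this set and `z₁ - z₂` is a
distributional subsolution of the heat equation there. Since `z₁ - z₂` is only continuous, it is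
mollified in space; by uniform continuity on a compact box, a positive value of `z₁ - z₂ - Φ`
yields an interior maximum `(t₁,x₁)` of the mollified function minus `Φ`, in a neighbourhood of
which `z₁ > v₁`. At this point the weak formulation (`obstacle_increment`) gives
`Φ_t ≤ (mollified difference)_xx`, while the second derivative test gives
`(mollified difference)_xx ≤ Φ_xx`, contradicting `Φ_t > Φ_xx`.

The measures `ηᵢ` are arbitrary, so a test function need not be integrable and its Bochner integral
may be the default `0`. The left-hand side of the weak formulation is continuous in time, and the
integral is monotone in time as long as the test function is integrable; hence, if integrability
fails at time `t`, the integral is `0` at all earlier times, and the monotonicity in time needed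
above still holds.
-/

open MeasureTheory Real Set Filter

/-- `(z,η)` solves the heat equation on `[0,∞)` with Dirichlet boundary condition and
obstacle `v` (deterministic obstacle problem, Definition 2.5 of Hambly–Kalsi). In the
measure `η` on `ℝ × ℝ`, the first coordinate is the space variable `x ∈ (0,∞)` and the
second coordinate is the time variable `s ∈ [0,T]`. -/
def IsObstacleSol (r T : ℝ) (v z : ℝ → ℝ → ℝ) (η : Measure (ℝ × ℝ)) : Prop :=
  -- (i) z ∈ C_r^T, z(t,0)=0, z(0,x)=0, z ≥ v
  ContinuousOn (Function.uncurry z) (Icc 0 T ×ˢ Ici 0) ∧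
  CrBdd r T z ∧
  (∀ t ∈ Icc (0:ℝ) T, z t 0 = 0) ∧
  (∀ x ≥ (0:ℝ), z 0 x = 0) ∧
  (∀ t ∈ Icc (0:ℝ) T, ∀ x ≥ (0:ℝ), v t x ≤ z t x) ∧
  -- (ii) η is a measure on (0,∞)×[0,T] with ∫∫ (z - v) dη = 0
  η ((Ioi (0:ℝ) ×ˢ Icc (0:ℝ) T)ᶜ) = 0 ∧
  (∫⁻ q, ENNReal.ofReal (z q.2 q.1 - v q.2 q.1) ∂η) = 0 ∧
  -- (iii) z weakly solves ∂z/∂t = ∂²z/∂x² + η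
  (∀ t ∈ Icc (0:ℝ) T, ∀ φ : ℝ → ℝ,
    ContDiff ℝ (⊤ : ℕ∞) φ → HasCompactSupport φ → φ 0 = 0 →
    ∫ x in Ioi (0:ℝ), z t x * φ x =
      (∫ s in Ioc (0:ℝ) t, ∫ x in Ioi (0:ℝ), z s x * deriv (deriv φ) x) +
      ∫ q in (Ioi (0:ℝ) ×ˢ Ioc (0:ℝ) t), φ q.1 ∂η)

open scoped Topology Convolution

/-! ### Extension to the plane and mollification in space -/

/-- The extension of `z : [0,T] × [0,∞) → ℝ` to the plane that is constant along the
projection onto `[0,T] × [0,∞)`. -/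
noncomputable def clampExt (T : ℝ) (z : ℝ → ℝ → ℝ) (t x : ℝ) : ℝ :=
  z (max 0 (min T t)) (max 0 x)

lemma clampExt_eq {T : ℝ} {z : ℝ → ℝ → ℝ} {t x : ℝ} (ht : t ∈ Icc 0 T) (hx : 0 ≤ x) :
    clampExt T z t x = z t x := by
  simp [clampExt, ht.1, ht.2, hx]

lemma continuous_clampExt {T : ℝ} (hT : 0 < T) {z : ℝ → ℝ → ℝ}
    (hz : ContinuousOn (Function.uncurry z) (Icc 0 T ×ˢ Ici 0)) :
    Continuous (Function.uncurry (clampExt T z)) := by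
  have h := hz.comp_continuous
    (f := fun q : ℝ × ℝ => (max 0 (min T q.1), max 0 q.2)) (by fun_prop)
    (fun q => ⟨⟨le_max_left _ _, max_le hT.le (min_le_left _ _)⟩, mem_Ici.2 (le_max_left _ _)⟩)
  exact h

/-- Mollification in the space variable: `W(t,·) ⋆ g` evaluated at `x`. -/
noncomputable def moll (g : ℝ → ℝ) (W : ℝ → ℝ → ℝ) (t x : ℝ) : ℝ :=
  ∫ y, W t y * g (x - y)

lemma moll_eq_swap (g : ℝ → ℝ) (W : ℝ → ℝ → ℝ) (t x : ℝ) :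
    moll g W t x = ∫ y, W t (x - y) * g y := by
  unfold moll
  rw [← integral_sub_left_eq_self (fun y => W t y * g (x - y)) volume x]
  simp

lemma continuous_moll {g : ℝ → ℝ} {W : ℝ → ℝ → ℝ} (hg : Continuous g)
    (hc : HasCompactSupport g) (hW : Continuous (Function.uncurry W)) :
    Continuous (Function.uncurry (moll g W)) := by
  have h : ContinuousOn (fun p : ℝ × ℝ => ∫ y, W p.1 (p.2 - y) * g y) univ := by
    refine continuousOn_integral_of_compact_support (k := tsupport g) hc ?_ ?_
    · have : Continuous (fun q : (ℝ × ℝ) × ℝ =>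
          Function.uncurry W (q.1.1, q.1.2 - q.2) * g q.2) := by fun_prop
      exact this.continuousOn
    · intro p y _ hy
      simp [image_eq_zero_of_notMem_tsupport hy]
  rw [← continuousOn_univ]
  exact h.congr (fun p _ => moll_eq_swap g W p.1 p.2)

lemma hasDerivAt_moll {g : ℝ → ℝ} {W : ℝ → ℝ → ℝ} (hg : ContDiff ℝ 1 g)
    (hc : HasCompactSupport g) (hW : Continuous (Function.uncurry W)) (t x : ℝ) :
    HasDerivAt (moll g W t) (moll (deriv g) W t x) x := by
  have hWt : Continuous (W t) := hW.comp (by fun_prop : Continuous fun y : ℝ => (t, y))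
  exact hc.hasDerivAt_convolution_right (ContinuousLinearMap.lsmul ℝ ℝ)
    (μ := volume) hWt.locallyIntegrable hg x

lemma abs_moll_sub_le {g : ℝ → ℝ} {W : ℝ → ℝ → ℝ} {δ ε : ℝ} (hε : 0 ≤ ε)
    (hs : Function.support g ⊆ Metric.ball 0 δ) (hnn : ∀ x, 0 ≤ g x) (hint : ∫ x, g x = 1)
    (hW : Continuous (Function.uncurry W)) (t x : ℝ)
    (h : ∀ y ∈ Metric.ball x δ, |W t y - W t x| ≤ ε) :
    |moll g W t x - W t x| ≤ ε := by
  have hWt : Continuous (W t) := hW.comp (by fun_prop : Continuous fun y : ℝ => (t, y))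
  have := dist_convolution_le (μ := volume) (f := g) (g := W t) (x₀ := x) (z₀ := W t x) hε hs hnn
    hint hWt.aestronglyMeasurable h
  rw [moll_eq_swap]
  simpa [convolution, Real.dist_eq, mul_comm] using this

/-! ### Time increments of the weak formulation -/

/-- Let `h` be continuous on `[s,t]`, at least `h s` where `P` holds and `0` where `P` fails. If `P`
fails at `t`, then `h s` cannot be positive, since `h` would skip the value `h s / 2`. -/
lemma eq_zero_of_jump_excluded {h : ℝ → ℝ} (hc : Continuous h) {P : ℝ → Prop} {s t : ℝ} (hst : s ≤ t)
    (hmono : ∀ τ ∈ Icc s t, P τ → h s ≤ h τ) (h0 : ∀ τ ∈ Icc s t, ¬ P τ → h τ = 0)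
    (hs : 0 ≤ h s) (hPt : ¬ P t) : h s = 0 := by
  by_contra hne
  have hpos : 0 < h s := lt_of_le_of_ne hs (Ne.symm hne)
  have ht := h0 t (right_mem_Icc.2 hst) hPt
  obtain ⟨τ, hτ, hτe⟩ := intermediate_value_Icc' hst hc.continuousOn
    (show h s / 2 ∈ Icc (h t) (h s) from ⟨by linarith, by linarith⟩)
  by_cases hP : P τ
  · have := hmono τ hτ hP; linarith
  · have := h0 τ hτ hP; linarith

lemma contDiff_one_deriv {g : ℝ → ℝ} (hg : ContDiff ℝ (⊤ : ℕ∞) g) : ContDiff ℝ 1 (deriv g) := by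
  have h2 : ContDiff ℝ (1 + 1) g := by
    have := contDiff_infty.1 hg 2
    norm_num at this ⊢
    exact this
  exact (contDiff_succ_iff_deriv.1 h2).2.2

/-- The weak formulation tested with `y ↦ g (x - y)`, on a time interval `[s,t]`: the mollified
solution is a supersolution of the heat equation, and a solution while `z` stays off the obstacle
on the support of the test function. Since `η` need not be locally finite, the integral of the test
function against `η` may be a junk `0`; `eq_zero_of_jump_excluded` shows that in this case the
integral vanishes at the earlier times too, so that both claims persist. -/
lemma obstacle_increment {r T : ℝ} (hT : 0 < T) {v z : ℝ → ℝ → ℝ} {η : Measure (ℝ × ℝ)}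
    (hv : ContinuousOn (Function.uncurry v) (Icc 0 T ×ˢ Ici 0))
    (hsol : IsObstacleSol r T v z η) {g : ℝ → ℝ} (hg : ContDiff ℝ (⊤ : ℕ∞) g)
    (hc : HasCompactSupport g) (hnn : ∀ x, 0 ≤ g x) {δ x : ℝ}
    (hs : tsupport g ⊆ Metric.closedBall 0 δ) (hδ : δ < x) {s t : ℝ} (h0s : 0 ≤ s)
    (hst : s ≤ t) (htT : t ≤ T) :
    (∫ τ in s..t, moll (deriv (deriv g)) (clampExt T z) τ x ≤
      moll g (clampExt T z) t x - moll g (clampExt T z) s x) ∧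
    ((∀ τ ∈ Ioc s t, ∀ y, |x - y| ≤ δ → v τ y < z τ y) →
      moll g (clampExt T z) t x - moll g (clampExt T z) s x =
        ∫ τ in s..t, moll (deriv (deriv g)) (clampExt T z) τ x) := by
  obtain ⟨hz, -, -, -, hvz, hη, hcomp, hweak⟩ := hsol
  have hZ := continuous_clampExt hT hz
  set Z := clampExt T z with hZdef
  set φ : ℝ → ℝ := fun y => g (x - y) with hφ
  have hφs : ContDiff ℝ (⊤ : ℕ∞) φ := hg.comp (by fun_prop)
  have hφc : HasCompactSupport φ := hc.comp_homeomorph (Homeomorph.subLeft x)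
  have hball : ∀ y, x - y ∈ tsupport g → |x - y| ≤ δ ∧ 0 < y := by
    intro y hy
    have := hs hy
    rw [mem_closedBall_zero_iff, Real.norm_eq_abs] at this
    exact ⟨this, by linarith [(abs_le.1 this).2]⟩
  have hφ0 : ∀ y, y ≤ 0 → φ y = 0 := fun y hy => by
    by_contra hne
    exact absurd (hball y (subset_tsupport _ hne)).2 (not_lt.2 hy)
  have hd1 : deriv φ = fun y => - deriv g (x - y) := by
    ext y; simp [hφ, deriv_comp_const_sub]
  have hd2 : deriv (deriv φ) = fun y => deriv (deriv g) (x - y) := by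
    rw [hd1]; ext y
    rw [deriv.fun_neg, deriv_comp_const_sub (f := deriv g)]; simp
  have hg2 : Continuous (deriv (deriv g)) := by
    exact (contDiff_one_deriv hg).continuous_deriv le_rfl
  have hM1 := continuous_moll hg.continuous hc hZ
  have hM2 := continuous_moll hg2 hc.deriv.deriv hZ
  have hM2x : Continuous fun τ => moll (deriv (deriv g)) Z τ x :=
    hM2.comp (by fun_prop : Continuous fun τ : ℝ => (τ, x))
  have hM1x : Continuous fun τ => moll g Z τ x :=
    hM1.comp (by fun_prop : Continuous fun τ : ℝ => (τ, x))
  -- the integrals over `(0,∞)` in the weak formulation are mollifications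
  have key : ∀ (k : ℝ → ℝ), (∀ y, y ≤ 0 → k (x - y) = 0) → ∀ τ ∈ Icc (0:ℝ) T,
      ∫ y in Ioi (0:ℝ), z τ y * k (x - y) = moll k Z τ x := by
    intro k hk τ hτ
    unfold moll
    rw [← setIntegral_eq_integral_of_forall_compl_eq_zero (s := Ioi (0:ℝ))
      (f := fun y => Z τ y * k (x - y))]
    · refine setIntegral_congr_fun measurableSet_Ioi (fun y hy => ?_)
      simp only [hZdef, clampExt_eq hτ (le_of_lt hy)]
    · intro y hy
      rw [hk y (not_lt.1 hy), mul_zero]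
  have hk2 : ∀ y, y ≤ 0 → deriv (deriv g) (x - y) = 0 := fun y hy => by
    by_contra hne
    have : x - y ∈ tsupport g :=
      tsupport_deriv_subset (support_deriv_subset (show x - y ∈ Function.support _ from hne))
    exact absurd (hball y this).2 (not_lt.2 hy)
  -- `h t` is the mass of the test function under `η` up to time `t`, expressed through `z` alone;
  -- in this form its continuity in `t` is visible
  set h : ℝ → ℝ := fun t => moll g Z t x - ∫ τ in (0:ℝ)..t, moll (deriv (deriv g)) Z τ x with hh
  have hhc : Continuous h :=
    hM1x.sub (intervalIntegral.continuous_primitive (fun a b => hM2x.intervalIntegrable a b) 0)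
  have hhη : ∀ t ∈ Icc (0:ℝ) T, h t = ∫ q in (Ioi (0:ℝ) ×ˢ Ioc (0:ℝ) t), φ q.1 ∂η := by
    intro t ht
    have hw := hweak t ht φ hφs hφc (hφ0 0 le_rfl)
    rw [key g hφ0 t ht] at hw
    have h2 : ∫ s in Ioc (0:ℝ) t, ∫ x in Ioi (0:ℝ), z s x * deriv (deriv φ) x
        = ∫ τ in (0:ℝ)..t, moll (deriv (deriv g)) Z τ x := by
      rw [intervalIntegral.integral_of_le ht.1]
      refine setIntegral_congr_fun measurableSet_Ioc (fun τ hτ => ?_)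
      simp only [hd2]
      exact key _ hk2 τ ⟨hτ.1.le, hτ.2.trans ht.2⟩
    rw [h2] at hw
    simp only [hh]; linarith
  let S : ℝ → Set (ℝ × ℝ) := fun t => Ioi (0:ℝ) ×ˢ Ioc (0:ℝ) t
  have hSm : ∀ t, MeasurableSet (S t) := fun t => measurableSet_Ioi.prod measurableSet_Ioc
  have hSmono : ∀ {a b}, a ≤ b → S a ⊆ S b := fun hab =>
    prod_mono le_rfl (Ioc_subset_Ioc_right hab)
  have hsub : ∀ a b, 0 ≤ a → a ≤ b → b ≤ T → IntegrableOn (fun q : ℝ × ℝ => φ q.1) (S b) η →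
      h b - h a = ∫ q in S b \ S a, φ q.1 ∂η := by
    intro a b ha hab hb hi
    rw [hhη b ⟨ha.trans hab, hb⟩, hhη a ⟨ha, hab.trans hb⟩]
    exact (setIntegral_sdiff (hSm a) hi (hSmono hab)).symm
  have hmono : ∀ a b, 0 ≤ a → a ≤ b → b ≤ T → IntegrableOn (fun q : ℝ × ℝ => φ q.1) (S b) η →
      h a ≤ h b := by
    intro a b ha hab hb hi
    have := hsub a b ha hab hb hi
    have h2 : 0 ≤ ∫ q in S b \ S a, φ q.1 ∂η := integral_nonneg (fun q => hnn _)
    linarith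
  have hnot : ¬ IntegrableOn (fun q : ℝ × ℝ => φ q.1) (S t) η → h s = 0 ∧ h t = 0 := by
    intro hni
    have hz0 : ∀ τ ∈ Icc s t, ¬ IntegrableOn (fun q : ℝ × ℝ => φ q.1) (S τ) η → h τ = 0 := by
      intro τ hτ hn
      rw [hhη τ ⟨h0s.trans hτ.1, hτ.2.trans htT⟩]
      exact integral_undef hn
    refine ⟨eq_zero_of_jump_excluded hhc hst (fun τ hτ => hmono s τ h0s hτ.1 (hτ.2.trans htT)) hz0 ?_ hni,
      hz0 t (right_mem_Icc.2 hst) hni⟩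
    rw [hhη s ⟨h0s, hst.trans htT⟩]
    exact integral_nonneg (fun q => hnn _)
  have hincr : h t - h s = moll g Z t x - moll g Z s x -
      ∫ τ in s..t, moll (deriv (deriv g)) Z τ x := by
    rw [← intervalIntegral.integral_interval_sub_left (hM2x.intervalIntegrable 0 t)
      (hM2x.intervalIntegrable 0 s)]
    simp only [hh]; ring
  by_cases hi : IntegrableOn (fun q : ℝ × ℝ => φ q.1) (S t) η
  swap
  · obtain ⟨h1, h2⟩ := hnot hi
    exact ⟨by linarith, fun _ => by linarith⟩
  refine ⟨by linarith [hmono s t h0s hst htT hi], fun hlt => ?_⟩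
  have hmem : ∀ᵐ q ∂η, q ∈ Ioi (0:ℝ) ×ˢ Icc (0:ℝ) T := hη
  have hae : ∀ᵐ q ∂η, ENNReal.ofReal (z q.2 q.1 - v q.2 q.1) = 0 := by
    have hco : ContinuousOn (fun q : ℝ × ℝ => ENNReal.ofReal (z q.2 q.1 - v q.2 q.1))
        (Ioi (0:ℝ) ×ˢ Icc (0:ℝ) T) := by
      have hm : MapsTo (Prod.swap : ℝ × ℝ → ℝ × ℝ) (Ioi (0:ℝ) ×ˢ Icc (0:ℝ) T)
        (Icc 0 T ×ˢ Ici 0) := fun q hq => ⟨hq.2, mem_Ici.2 (le_of_lt hq.1)⟩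
      exact ENNReal.continuous_ofReal.comp_continuousOn
        ((hz.comp continuous_swap.continuousOn hm).sub (hv.comp continuous_swap.continuousOn hm))
    have hm : AEMeasurable (fun q : ℝ × ℝ => ENNReal.ofReal (z q.2 q.1 - v q.2 q.1)) η := by
      have := hco.aemeasurable (μ := η) (measurableSet_Ioi.prod measurableSet_Icc)
      rwa [Measure.restrict_eq_self_of_ae_mem hmem] at this
    exact (lintegral_eq_zero_iff' hm).1 hcomp
  have hzero : ∫ q in S t \ S s, φ q.1 ∂η = 0 := by
    refine setIntegral_eq_zero_of_ae_eq_zero ?_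
    filter_upwards [hae] with q hq hqS
    by_contra hne
    have hb := (hball q.1 (subset_tsupport _ hne)).1
    have hτ : q.2 ∈ Ioc s t := by
      obtain ⟨⟨ha, hb1, hb2⟩, hn⟩ := hqS
      refine ⟨?_, hb2⟩
      by_contra hle
      exact hn ⟨ha, hb1, not_lt.1 hle⟩
    have := hlt q.2 hτ q.1 hb
    rw [ENNReal.ofReal_eq_zero] at hq
    linarith
  have := hsub s t h0s hst htT hi
  linarith

/-! ### Calculus at a maximum and the barrier -/

lemma moll_sub {g : ℝ → ℝ} {W₁ W₂ : ℝ → ℝ → ℝ} (hg : Continuous g) (hc : HasCompactSupport g)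
    (h₁ : Continuous (Function.uncurry W₁)) (h₂ : Continuous (Function.uncurry W₂)) (t x : ℝ) :
    moll g (fun t x => W₁ t x - W₂ t x) t x = moll g W₁ t x - moll g W₂ t x := by
  have hi : ∀ W : ℝ → ℝ → ℝ, Continuous (Function.uncurry W) →
      Integrable (fun y => W t y * g (x - y)) := by
    intro W hW
    have hWt : Continuous (W t) := hW.comp (by fun_prop : Continuous fun y : ℝ => (t, y))
    refine Continuous.integrable_of_hasCompactSupport (by fun_prop) ?_
    exact (hc.comp_homeomorph (Homeomorph.subLeft x)).mul_left
  unfold moll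
  rw [← integral_sub (hi W₁ h₁) (hi W₂ h₂)]
  simp only [sub_mul]

lemma deriv_deriv_nonpos_of_isLocalMax {f : ℝ → ℝ} {x : ℝ} (hf : IsLocalMax f x)
    (hc : ContinuousAt f x) : deriv (deriv f) x ≤ 0 := by
  by_contra! hpos
  have hmin := isLocalMin_of_deriv_deriv_pos hpos hf.deriv_eq_zero hc
  have heq : f =ᶠ[𝓝 x] fun _ => f x := by
    filter_upwards [hf, hmin] with y h1 h2 using le_antisymm h1 h2
  have := heq.deriv.deriv_eq
  simp at this
  linarith

/-- One-sided Fermat condition: `k` is maximal at `t` among nearby earlier times. -/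
lemma deriv_nonneg_of_left_max {k : ℝ → ℝ} {k' t : ℝ} (hk : HasDerivAt k k' t)
    (h : ∀ᶠ s in 𝓝[<] t, k s ≤ k t) : 0 ≤ k' := by
  refine ge_of_tendsto (hasDerivAt_iff_tendsto_slope_left_right.1 hk).1 ?_
  filter_upwards [h, self_mem_nhdsWithin] with s hs hst
  rw [slope_def_field]
  exact div_nonneg_of_nonpos (by linarith) (by linarith [mem_Iio.1 hst])

/-- The barrier `M e^{rx + r²t} + ε e^{Rx + (R²+1)t}`, where `R = |r| + 1`. The first summand solves
the heat equation; the second one makes the sum a strict supersolution that dominates every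
function of growth `e^{rx}`. -/
noncomputable def barrier (r M ε t x : ℝ) : ℝ :=
  M * exp (r * x + r ^ 2 * t) + ε * exp ((|r| + 1) * x + ((|r| + 1) ^ 2 + 1) * t)

lemma continuous_barrier (r M ε : ℝ) : Continuous (Function.uncurry (barrier r M ε)) := by
  unfold barrier Function.uncurry
  fun_prop

lemma hasDerivAt_exp_lin (a b c x : ℝ) :
    HasDerivAt (fun x => c * exp (a * x + b)) (c * a * exp (a * x + b)) x := by
  have h : HasDerivAt (fun x => a * x + b) a x := by
    simpa using ((hasDerivAt_id x).const_mul a).add_const b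
  convert! (h.exp.const_mul c) using 1
  ring

lemma hasDerivAt_barrier_space (r M ε t : ℝ) : ∀ x, HasDerivAt (barrier r M ε t)
    (barrier r (M * r) (ε * (|r| + 1)) t x) x := fun x =>
  (hasDerivAt_exp_lin r (r ^ 2 * t) M x).add
    (hasDerivAt_exp_lin (|r| + 1) (((|r| + 1) ^ 2 + 1) * t) ε x)

lemma hasDerivAt_barrier_time (r M ε t x : ℝ) : HasDerivAt (fun t => barrier r M ε t x)
    (barrier r (M * r ^ 2) (ε * ((|r| + 1) ^ 2 + 1)) t x) t := by
  have := (hasDerivAt_exp_lin (r ^ 2) (r * x) M t).add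
    (hasDerivAt_exp_lin ((|r| + 1) ^ 2 + 1) ((|r| + 1) * x) ε t)
  simpa only [barrier, add_comm] using! this

/-! ### The comparison principle -/

/-- If `v₁ - v₂ ≤ M e^{rx}` then `z₁ - z₂` stays below every barrier. Otherwise the mollified
difference minus the barrier has an interior maximum `(t₁,x₁)` around which `z₁ > v₁`, hence where
the mollified difference is a subsolution of the heat equation. The first-order condition in time
and the second-order condition in space then contradict the strictness of the barrier. -/
lemma comparison {r T M ε : ℝ} (hT : 0 < T) (hM : 0 ≤ M) (hε : 0 < ε)
    {v₁ v₂ z₁ z₂ : ℝ → ℝ → ℝ} {η₁ η₂ : Measure (ℝ × ℝ)}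
    (hv₁ : ContinuousOn (Function.uncurry v₁) (Icc 0 T ×ˢ Ici 0))
    (hv₂ : ContinuousOn (Function.uncurry v₂) (Icc 0 T ×ˢ Ici 0))
    (h₁ : IsObstacleSol r T v₁ z₁ η₁) (h₂ : IsObstacleSol r T v₂ z₂ η₂)
    (hd : ∀ t ∈ Icc (0:ℝ) T, ∀ x ≥ (0:ℝ), v₁ t x - v₂ t x ≤ M * exp (r * x))
    {t x : ℝ} (ht : t ∈ Icc 0 T) (hx : 0 ≤ x) :
    z₁ t x - z₂ t x ≤ barrier r M ε t x := by
  obtain ⟨hc₁, ⟨B₁, hB₁⟩, hz₁0, hz₁i, -⟩ := id h₁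
  obtain ⟨hc₂, ⟨B₂, hB₂⟩, hz₂0, hz₂i, hvz₂, -⟩ := id h₂
  by_contra! hlt
  have hZ₁ := continuous_clampExt hT hc₁
  have hZ₂ := continuous_clampExt hT hc₂
  set W : ℝ → ℝ → ℝ := fun t x => clampExt T z₁ t x - clampExt T z₂ t x with hWdef
  have hW : Continuous (Function.uncurry W) := hZ₁.sub hZ₂
  have hWeq : ∀ t ∈ Icc (0:ℝ) T, ∀ x, 0 ≤ x → W t x = z₁ t x - z₂ t x := fun t ht x hx => by
    simp only [hWdef, clampExt_eq ht hx]
  set Φ := barrier r M ε with hΦ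
  have hΦc : Continuous (Function.uncurry Φ) := continuous_barrier r M ε
  set U : ℝ → ℝ → ℝ := fun t x => W t x - Φ t x with hU
  have hUc : Continuous (Function.uncurry U) := hW.sub hΦc
  have hΦpos : ∀ t x, 0 < Φ t x := fun t x => by
    simp only [hΦ, barrier]; positivity
  set m := U t x with hm
  have hmpos : 0 < m := by
    simp only [hm, hU, hWeq t ht x hx]; linarith
  -- behaviour of `U` on the parabolic boundary and far out in space
  have hU0 : ∀ x, 0 ≤ x → U 0 x < 0 := fun x hx => by
    have := hΦpos 0 x
    simp only [hU, hWeq 0 ⟨le_rfl, hT.le⟩ x hx, hz₁i x hx, hz₂i x hx]; linarith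
  have hUl : ∀ t ∈ Icc (0:ℝ) T, U t 0 < 0 := fun t ht => by
    have := hΦpos t 0
    simp only [hU, hWeq t ht 0 le_rfl, hz₁0 t ht, hz₂0 t ht]; linarith
  set X : ℝ := max 0 ((B₁ + B₂) / ε) with hX
  have hX0 : 0 ≤ X := le_max_left _ _
  have hUX : ∀ t ∈ Icc (0:ℝ) T, ∀ x, X ≤ x → U t x ≤ 0 := fun t ht x hx => by
    have hx0 : 0 ≤ x := hX0.trans hx
    have e1 : exp (-r * x) * |z₁ t x| ≤ B₁ := hB₁ ⟨(t, x), ⟨ht, hx0⟩, rfl⟩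
    have e2 : exp (-r * x) * |z₂ t x| ≤ B₂ := hB₂ ⟨(t, x), ⟨ht, hx0⟩, rfl⟩
    have e3 : B₁ + B₂ ≤ ε * x := by
      have := (le_max_right 0 ((B₁ + B₂) / ε)).trans hx
      rwa [div_le_iff₀ hε, mul_comm] at this
    have e4 : exp (-r * x) * (z₁ t x - z₂ t x) ≤ B₁ + B₂ := by
      have a1 := mul_le_mul_of_nonneg_left (le_abs_self (z₁ t x)) (exp_pos (-r * x)).le
      have a2 := mul_le_mul_of_nonneg_left (neg_abs_le (z₂ t x)) (exp_pos (-r * x)).le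
      linarith
    have e5 : x ≤ exp (-r * x) * exp ((|r| + 1) * x + ((|r| + 1) ^ 2 + 1) * t) := by
      rw [← exp_add]
      have : x ≤ -r * x + ((|r| + 1) * x + ((|r| + 1) ^ 2 + 1) * t) := by
        have b1 : 0 ≤ (|r| - r) * x := mul_nonneg (by linarith [le_abs_self r]) hx0
        have b2 : 0 ≤ ((|r| + 1) ^ 2 + 1) * t := mul_nonneg (by positivity) ht.1
        linarith
      linarith [add_one_le_exp (-r * x + ((|r| + 1) * x + ((|r| + 1) ^ 2 + 1) * t))]
    have e6 : exp (-r * x) * (z₁ t x - z₂ t x) ≤ exp (-r * x) * Φ t x := by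
      have b3 : 0 ≤ exp (-r * x) * (M * exp (r * x + r ^ 2 * t)) := by positivity
      have b4 := mul_le_mul_of_nonneg_left e5 hε.le
      simp only [hΦ, barrier]
      nlinarith
    have := le_of_mul_le_mul_left e6 (exp_pos _)
    simp only [hU, hWeq t ht x hx0]; linarith
  have hxX : x < X := by
    by_contra! h
    linarith [hUX t ht x h]
  -- a common modulus of continuity on a compact box
  have hK : IsCompact (Icc (0:ℝ) T ×ˢ Icc (-1:ℝ) (X + 1)) := isCompact_Icc.prod isCompact_Icc
  obtain ⟨δ₁, hδ₁, hu₁⟩ := Metric.uniformContinuousOn_iff.1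
    (hK.uniformContinuousOn_of_continuous hW.continuousOn) (m / 4) (by linarith)
  obtain ⟨δ₂, hδ₂, hu₂⟩ := Metric.uniformContinuousOn_iff.1
    (hK.uniformContinuousOn_of_continuous hUc.continuousOn) (m / 4) (by linarith)
  set δ := min 1 (min δ₁ δ₂) / 2 with hδ
  have hmn : 0 < min 1 (min δ₁ δ₂) := by positivity
  have hδ0 : 0 < δ := by positivity
  have l1 : min 1 (min δ₁ δ₂) ≤ 1 := min_le_left _ _
  have l2 : min 1 (min δ₁ δ₂) ≤ δ₁ := (min_le_right _ _).trans (min_le_left _ _)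
  have l3 : min 1 (min δ₁ δ₂) ≤ δ₂ := (min_le_right _ _).trans (min_le_right _ _)
  have hUu : ∀ s ∈ Icc (0:ℝ) T, ∀ t ∈ Icc (0:ℝ) T, ∀ x ∈ Icc 0 X, ∀ y, |y - x| ≤ δ →
      |s - t| ≤ δ → |U s y - U t x| < m / 4 := by
    intro s hs t ht x hx y hy hst
    have hy' := abs_le.1 hy
    refine hu₂ (s, y) ⟨hs, ⟨by linarith [hx.1], by linarith [hx.2]⟩⟩ (t, x)
      ⟨ht, ⟨by linarith [hx.1], by linarith [hx.2]⟩⟩ ?_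
    rw [Prod.dist_eq, Real.dist_eq, Real.dist_eq]
    exact max_lt (by linarith) (by linarith)
  let bump : ContDiffBump (0:ℝ) := ⟨δ / 2, δ, by linarith, by linarith⟩
  set g : ℝ → ℝ := bump.normed volume with hg
  have hgs : ContDiff ℝ (⊤ : ℕ∞) g := bump.contDiff_normed
  have hgc : HasCompactSupport g := bump.hasCompactSupport_normed
  have hgn : ∀ x, 0 ≤ g x := bump.nonneg_normed
  have hgt : tsupport g ⊆ Metric.closedBall 0 δ := bump.tsupport_normed_eq.subset
  have hg1 : ContDiff ℝ 1 g := hgs.of_le (by exact_mod_cast le_top)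
  have hg2 := contDiff_one_deriv hgs
  have hg3 : Continuous (deriv (deriv g)) := hg2.continuous_deriv le_rfl
  have hFW : ∀ t ∈ Icc (0:ℝ) T, ∀ x ∈ Icc 0 X, |moll g W t x - W t x| ≤ m / 4 := by
    intro t ht x hx
    refine abs_moll_sub_le (δ := δ) (by linarith) bump.support_normed_eq.subset hgn
      bump.integral_normed hW t x (fun y hy => ?_)
    rw [Metric.mem_ball, Real.dist_eq] at hy
    have hy' := abs_lt.1 hy
    refine (hu₁ (t, y) ⟨ht, ⟨by linarith [hx.1], by linarith [hx.2]⟩⟩ (t, x)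
      ⟨ht, ⟨by linarith [hx.1], by linarith [hx.2]⟩⟩ ?_).le
    rw [Prod.dist_eq, Real.dist_eq, Real.dist_eq]
    simp only [sub_self, abs_zero]
    exact max_lt (by linarith) (by linarith)
  have hFc := continuous_moll hg1.continuous hgc hW
  have hF2c := continuous_moll hg3 hgc.deriv.deriv hW
  -- a maximum point of the mollified difference minus the barrier
  obtain ⟨⟨t₁, x₁⟩, ⟨ht₁, hx₁⟩, hmax⟩ := (isCompact_Icc.prod isCompact_Icc).exists_isMaxOn
    (s := Icc (0:ℝ) T ×ˢ Icc (0:ℝ) X) ⟨(t, x), ht, hx, hxX.le⟩ (hFc.sub hΦc).continuousOn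
  have hmax' : ∀ t ∈ Icc (0:ℝ) T, ∀ x ∈ Icc (0:ℝ) X,
      moll g W t x - Φ t x ≤ moll g W t₁ x₁ - Φ t₁ x₁ := fun t ht x hx =>
    hmax (show (t, x) ∈ Icc (0:ℝ) T ×ˢ Icc (0:ℝ) X from ⟨ht, hx⟩)
  simp only at ht₁ hx₁
  have hU₁ : m / 2 ≤ U t₁ x₁ := by
    have a1 := hmax' t ht x ⟨hx, hxX.le⟩
    have a2 := (abs_le.1 (hFW t ht x ⟨hx, hxX.le⟩)).1
    have a3 := (abs_le.1 (hFW t₁ ht₁ x₁ hx₁)).2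
    have a4 : m = W t x - Φ t x := hm
    simp only [hU]; linarith
  have ht₁0 : 0 < t₁ := by
    rcases ht₁.1.lt_or_eq with h | h
    · exact h
    · rw [← h] at hU₁; linarith [hU0 x₁ hx₁.1]
  have hx₁X : x₁ < X := by
    by_contra! h
    linarith [hUX t₁ ht₁ x₁ h]
  have hx₁δ : δ < x₁ := by
    by_contra! h
    have := hUu t₁ ht₁ t₁ ht₁ x₁ hx₁ 0 (by rw [zero_sub, abs_neg, abs_of_nonneg hx₁.1]; exact h)
      (by simpa using hδ0.le)
    linarith [hUl t₁ ht₁, (abs_lt.1 this).1]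
  -- near the maximum point the first solution does not touch its obstacle
  have hnc : ∀ τ ∈ Icc (0:ℝ) T, |τ - t₁| ≤ δ → ∀ y, |x₁ - y| ≤ δ → v₁ τ y < z₁ τ y := by
    intro τ hτ hτδ y hy
    have hy0 : 0 ≤ y := by linarith [(abs_le.1 hy).2]
    have a1 := (abs_lt.1 (hUu τ hτ t₁ ht₁ x₁ hx₁ y (by rwa [abs_sub_comm]) hτδ)).1
    have a2 : 0 < U τ y := by linarith
    simp only [hU, hWeq τ hτ y hy0] at a2
    have a3 := hd τ hτ y hy0
    have a4 := hvz₂ τ hτ y hy0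
    have a5 : M * exp (r * y) ≤ Φ τ y := by
      simp only [hΦ, barrier]
      have : M * exp (r * y) ≤ M * exp (r * y + r ^ 2 * τ) :=
        mul_le_mul_of_nonneg_left (exp_le_exp.2 (by nlinarith [hτ.1, sq_nonneg r])) hM
      have : 0 < ε * exp ((|r| + 1) * y + ((|r| + 1) ^ 2 + 1) * τ) := by positivity
      linarith
    linarith
  have hF2x : Continuous fun τ => moll (deriv (deriv g)) W τ x₁ :=
    hF2c.comp (by fun_prop : Continuous fun τ : ℝ => (τ, x₁))
  have htime : barrier r (M * r ^ 2) (ε * ((|r| + 1) ^ 2 + 1)) t₁ x₁ ≤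
      moll (deriv (deriv g)) W t₁ x₁ := by
    have hk := (hF2x.integral_hasStrictDerivAt 0 t₁).hasDerivAt.sub
      (hasDerivAt_barrier_time r M ε t₁ x₁)
    refine sub_nonneg.1 (deriv_nonneg_of_left_max hk ?_)
    have hnear : Ioo (max 0 (t₁ - δ)) t₁ ∈ 𝓝[<] t₁ :=
      Ioo_mem_nhdsLT (max_lt ht₁0 (by linarith))
    filter_upwards [hnear] with s hs
    have hs0 : 0 ≤ s := (le_max_left _ _).trans hs.1.le
    have hsδ : t₁ - δ < s := (le_max_right _ _).trans_lt hs.1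
    have i1 := (obstacle_increment hT hv₁ h₁ hgs hgc hgn hgt hx₁δ hs0 hs.2.le ht₁.2).2
      (fun τ hτ => hnc τ ⟨hs0.trans hτ.1.le, hτ.2.trans ht₁.2⟩
        (abs_le.2 ⟨by linarith [hτ.1], by linarith [hτ.2]⟩))
    have i2 := (obstacle_increment hT hv₂ h₂ hgs hgc hgn hgt hx₁δ hs0 hs.2.le ht₁.2).1
    have i3 := hmax' s ⟨hs0, hs.2.le.trans ht₁.2⟩ x₁ hx₁
    have ii : ∀ z : ℝ → ℝ → ℝ, Continuous (Function.uncurry z) → ∀ a b,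
        IntervalIntegrable (fun τ => moll (deriv (deriv g)) z τ x₁) volume a b := by
      intro z hz a b
      exact ((continuous_moll hg3 hgc.deriv.deriv hz).comp
        (by fun_prop : Continuous fun τ : ℝ => (τ, x₁))).intervalIntegrable a b
    have i4 : ∫ τ in s..t₁, moll (deriv (deriv g)) W τ x₁ =
        (∫ τ in s..t₁, moll (deriv (deriv g)) (clampExt T z₁) τ x₁) -
        ∫ τ in s..t₁, moll (deriv (deriv g)) (clampExt T z₂) τ x₁ := by
      rw [← intervalIntegral.integral_sub (ii _ hZ₁ _ _) (ii _ hZ₂ _ _)]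
      simp only [hWdef, moll_sub hg3 hgc.deriv.deriv hZ₁ hZ₂]
    have i5 := intervalIntegral.integral_interval_sub_left (ii W hW 0 t₁) (ii W hW 0 s)
    have i6 : ∀ t, moll g W t x₁ = _ := fun t =>
      moll_sub hg1.continuous hgc hZ₁ hZ₂ t x₁
    rw [i6, i6] at i3
    simp only [Pi.sub_apply]
    linarith
  have hspace : moll (deriv (deriv g)) W t₁ x₁ ≤
      barrier r (M * r * r) (ε * (|r| + 1) * (|r| + 1)) t₁ x₁ := by
    have d1 : ∀ x, HasDerivAt (fun x => moll g W t₁ x - Φ t₁ x)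
        (moll (deriv g) W t₁ x - barrier r (M * r) (ε * (|r| + 1)) t₁ x) x := fun x =>
      (hasDerivAt_moll hg1 hgc hW t₁ x).sub (hasDerivAt_barrier_space r M ε t₁ x)
    have d2 := (hasDerivAt_moll hg2 hgc.deriv hW t₁ x₁).sub
      (hasDerivAt_barrier_space r (M * r) (ε * (|r| + 1)) t₁ x₁)
    have hloc : IsLocalMax (fun x => moll g W t₁ x - Φ t₁ x) x₁ := by
      filter_upwards [Icc_mem_nhds (hδ0.trans hx₁δ) hx₁X] with y hy using hmax' t₁ ht₁ y hy
    have := deriv_deriv_nonpos_of_isLocalMax hloc (d1 x₁).continuousAt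
    rw [funext fun x => (d1 x).deriv] at this
    rw [show deriv (fun x => moll (deriv g) W t₁ x - barrier r (M * r) (ε * (|r| + 1)) t₁ x) x₁ = _
      from d2.deriv] at this
    linarith
  have hstrict := htime.trans hspace
  simp only [barrier] at hstrict
  have hp : 0 < ε * exp ((|r| + 1) * x₁ + ((|r| + 1) ^ 2 + 1) * t₁) := by positivity
  nlinarith

lemma comparison_limit {r T M : ℝ} (hT : 0 < T) (hM : 0 ≤ M)
    {v₁ v₂ z₁ z₂ : ℝ → ℝ → ℝ} {η₁ η₂ : Measure (ℝ × ℝ)}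
    (hv₁ : ContinuousOn (Function.uncurry v₁) (Icc 0 T ×ˢ Ici 0))
    (hv₂ : ContinuousOn (Function.uncurry v₂) (Icc 0 T ×ˢ Ici 0))
    (h₁ : IsObstacleSol r T v₁ z₁ η₁) (h₂ : IsObstacleSol r T v₂ z₂ η₂)
    (hd : ∀ t ∈ Icc (0:ℝ) T, ∀ x ≥ (0:ℝ), v₁ t x - v₂ t x ≤ M * exp (r * x))
    {t x : ℝ} (ht : t ∈ Icc 0 T) (hx : 0 ≤ x) :
    exp (-r * x) * (z₁ t x - z₂ t x) ≤ exp (r ^ 2 * T) * M := by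
  have hlim : z₁ t x - z₂ t x ≤ M * exp (r * x + r ^ 2 * t) := by
    set E := exp ((|r| + 1) * x + ((|r| + 1) ^ 2 + 1) * t) with hE
    have hEpos : 0 < E := exp_pos _
    refine le_of_forall_pos_le_add (fun ε hε => ?_)
    have := comparison hT hM (div_pos hε hEpos) hv₁ hv₂ h₁ h₂ hd ht hx
    rwa [barrier, ← hE, div_mul_cancel₀ _ hEpos.ne'] at this
  calc exp (-r * x) * (z₁ t x - z₂ t x)
      ≤ exp (-r * x) * (M * exp (r * x + r ^ 2 * t)) :=
        mul_le_mul_of_nonneg_left hlim (exp_pos _).le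
    _ = exp (r ^ 2 * t) * M := by
        rw [mul_left_comm, ← exp_add, mul_comm]; congr 2; ring
    _ ≤ exp (r ^ 2 * T) * M :=
        mul_le_mul_of_nonneg_right
          (exp_le_exp.2 (mul_le_mul_of_nonneg_left ht.2 (sq_nonneg r))) hM

/-- Theorem 2.6 of Hambly–Kalsi, comparison estimate: the solution of the
obstacle problem depends Lipschitz-continuously on the obstacle in `C_r^T`. -/
theorem stmt_9 (r T : ℝ) (hT : 0 < T) :
    ∃ C > (0:ℝ), ∀ (v₁ v₂ z₁ z₂ : ℝ → ℝ → ℝ) (η₁ η₂ : Measure (ℝ × ℝ)),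
      ContinuousOn (Function.uncurry v₁) (Icc 0 T ×ˢ Ici 0) →
      ContinuousOn (Function.uncurry v₂) (Icc 0 T ×ˢ Ici 0) →
      CrBdd r T v₁ → CrBdd r T v₂ →
      (∀ t ∈ Icc (0:ℝ) T, v₁ t 0 = 0) → (∀ t ∈ Icc (0:ℝ) T, v₂ t 0 = 0) →
      (∀ x ≥ (0:ℝ), v₁ 0 x ≤ 0) → (∀ x ≥ (0:ℝ), v₂ 0 x ≤ 0) →
      IsObstacleSol r T v₁ z₁ η₁ → IsObstacleSol r T v₂ z₂ η₂ →
      ∀ t ∈ Icc (0:ℝ) T, ∀ x ≥ (0:ℝ),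
        Real.exp (-r * x) * |z₁ t x - z₂ t x|
          ≤ C * CrNorm r T (fun t' x' => v₁ t' x' - v₂ t' x') := by
  refine ⟨exp (r ^ 2 * T), exp_pos _, ?_⟩
  intro v₁ v₂ z₁ z₂ η₁ η₂ hv₁ hv₂ hb₁ hb₂ _ _ _ _ h₁ h₂ t ht x hx
  set M := CrNorm r T (fun t' x' => v₁ t' x' - v₂ t' x') with hMdef
  have hbdd : CrBdd r T (fun t' x' => v₁ t' x' - v₂ t' x') := by
    obtain ⟨B₁, hB₁⟩ := hb₁
    obtain ⟨B₂, hB₂⟩ := hb₂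
    refine ⟨B₁ + B₂, ?_⟩
    rintro _ ⟨q, hq, rfl⟩
    have e1 : exp (-r * q.2) * |v₁ q.1 q.2| ≤ B₁ := hB₁ ⟨q, hq, rfl⟩
    have e2 : exp (-r * q.2) * |v₂ q.1 q.2| ≤ B₂ := hB₂ ⟨q, hq, rfl⟩
    have e3 := mul_le_mul_of_nonneg_left (abs_sub (v₁ q.1 q.2) (v₂ q.1 q.2))
      (exp_pos (-r * q.2)).le
    simp only
    linarith
  have hle : ∀ t ∈ Icc (0:ℝ) T, ∀ x ≥ (0:ℝ), exp (-r * x) * |v₁ t x - v₂ t x| ≤ M :=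
    fun t ht x hx => le_csSup hbdd ⟨(t, x), ⟨ht, hx⟩, rfl⟩
  have hM : 0 ≤ M := le_trans (by positivity) (hle t ht x hx)
  have hle' : ∀ t ∈ Icc (0:ℝ) T, ∀ x ≥ (0:ℝ), |v₁ t x - v₂ t x| ≤ M * exp (r * x) := by
    intro t ht x hx
    have h := mul_le_mul_of_nonneg_right (hle t ht x hx) (exp_pos (r * x)).le
    have e : exp (-r * x) * exp (r * x) = 1 := by
      rw [← exp_add]; simp
    calc |v₁ t x - v₂ t x| = (exp (-r * x) * exp (r * x)) * |v₁ t x - v₂ t x| := by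
          rw [e, one_mul]
      _ = exp (-r * x) * |v₁ t x - v₂ t x| * exp (r * x) := by ring
      _ ≤ _ := h
  rcases abs_cases (z₁ t x - z₂ t x) with ⟨h, -⟩ | ⟨h, -⟩
  · rw [h]
    exact comparison_limit hT hM hv₁ hv₂ h₁ h₂
      (fun t ht x hx => (le_abs_self _).trans (hle' t ht x hx)) ht hx
  · rw [h, neg_sub]
    exact comparison_limit hT hM hv₂ hv₁ h₂ h₁
      (fun t ht x hx => (le_abs_self _).trans (abs_sub_comm (v₁ t x) _ ▸ hle' t ht x hx)) ht hx
end

section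
/- Let r ∈ ℝ, T > 0, p > 4, R > 0, and let σ : [0,∞)×ℝ → ℝ be measurable with |σ(x,u)| ≤ R(e^{rx}+|u|) for all x ≥ 0, u ∈ ℝ. Then there exists a constant C = C(r,p,R,T) > 0 such that for every continuous u : [0,T]×[0,∞) → ℝ with ‖u‖_{C_r^T} < ∞, and for all t ∈ [0,T] and x ≥ 0, ∫_0^t ∫_0^∞ G(t−s,x,y)² |σ(y,u(s,y))|² dy ds ≤ C e^{2rx} ( 1 + ‖u‖_{C_r^T}² ) < ∞. -/
/-!
With `N = ‖u‖_{C_r^T}`, the growth hypothesis gives `|σ(y, u(s,y))|² ≤ 2R²(1 + N²) e^{2ry}` for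
`s ∈ [0,T]`, `y ≥ 0`. For `τ = t - s > 0` the kernel satisfies
`0 ≤ G(τ,x,y) ≤ (4πτ)^{-1/2} e^{-(x-y)²/(4τ)}`, and the weight is absorbed by half of the Gaussian
exponent of `G²`:
`2r(y - x) ≤ (x-y)²/(4τ) + 4r²τ`.
Hence `G(τ,x,y)² e^{2ry} ≤ e^{4r²T} e^{2rx} (4πτ)⁻¹ e^{-(x-y)²/(4τ)}` (`G_sq_mul_exp_le`).
Integrating the Gaussian over `y` leaves `(4πτ)^{-1/2}` (`inner_integral_le`), whose time integral
over `(0,t)` is `√(t/π) ≤ √(T/π)` (`integral_inv_sqrt`).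

All comparisons of integrals have a nonnegative left side and an integrable majorant, so no
measurability of the integrand is required.
-/

open MeasureTheory Real Set Filter

lemma G_nonneg {τ x y : ℝ} (hτ : 0 < τ) (hx : 0 ≤ x) (hy : 0 ≤ y) : 0 ≤ G τ x y := by
  unfold G
  refine mul_nonneg (by positivity) (sub_nonneg.2 (Real.exp_le_exp.2 ?_))
  gcongr ?_ / _
  nlinarith [mul_nonneg hx hy]

lemma G_le {τ x y : ℝ} :
    G τ x y ≤ (Real.sqrt (4 * Real.pi * τ))⁻¹ * Real.exp (-(x - y) ^ 2 / (4 * τ)) := by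
  unfold G
  gcongr
  linarith [Real.exp_pos (-(x + y) ^ 2 / (4 * τ))]

/-- The exponential weight costs half of the Gaussian decay of `G²` and a factor `e^{4r²T}`. -/
lemma G_sq_mul_exp_le {r T τ x y : ℝ} (hτ : 0 < τ) (hτT : τ ≤ T) (hx : 0 ≤ x) (hy : 0 ≤ y) :
    (G τ x y) ^ 2 * Real.exp (2 * r * y) ≤
      (Real.exp (4 * r ^ 2 * T) * Real.exp (2 * r * x)) *
        ((4 * Real.pi * τ)⁻¹ * Real.exp (-(1 / (4 * τ)) * (y - x) ^ 2)) := by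
  have hsq : (Real.sqrt (4 * Real.pi * τ))⁻¹ ^ 2 = (4 * Real.pi * τ)⁻¹ := by
    rw [inv_pow, Real.sq_sqrt (by positivity)]
  -- Completing the square: `(y - x - 4rτ)² ≥ 0`, divided by `4τ`.
  have hexp : 2 * (-(x - y) ^ 2 / (4 * τ)) + 2 * r * y ≤
      4 * r ^ 2 * T + 2 * r * x + -(1 / (4 * τ)) * (y - x) ^ 2 := by
    have h1 : 0 ≤ (y - x - 4 * r * τ) ^ 2 / (4 * τ) := by positivity
    have h2 : (y - x - 4 * r * τ) ^ 2 / (4 * τ) =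
        (y - x) ^ 2 / (4 * τ) - 2 * r * (y - x) + 4 * r ^ 2 * τ := by
      field_simp
      ring
    have h3 : 2 * (-(x - y) ^ 2 / (4 * τ)) = -2 * ((y - x) ^ 2 / (4 * τ)) := by ring
    have h4 : -(1 / (4 * τ)) * (y - x) ^ 2 = -((y - x) ^ 2 / (4 * τ)) := by ring
    have h5 : 4 * r ^ 2 * τ ≤ 4 * r ^ 2 * T := by gcongr
    rw [h3, h4]
    linarith
  calc (G τ x y) ^ 2 * Real.exp (2 * r * y)
      ≤ ((Real.sqrt (4 * Real.pi * τ))⁻¹ * Real.exp (-(x - y) ^ 2 / (4 * τ))) ^ 2 *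
          Real.exp (2 * r * y) := by
        gcongr
        · exact G_nonneg hτ hx hy
        · exact G_le
    _ = (4 * Real.pi * τ)⁻¹ * Real.exp (2 * (-(x - y) ^ 2 / (4 * τ)) + 2 * r * y) := by
        rw [mul_pow, hsq, ← Real.exp_nat_mul, Real.exp_add, mul_assoc]
        norm_cast
    _ ≤ (4 * Real.pi * τ)⁻¹ *
          Real.exp (4 * r ^ 2 * T + 2 * r * x + -(1 / (4 * τ)) * (y - x) ^ 2) := by
        gcongr
    _ = _ := by
        rw [Real.exp_add, Real.exp_add]
        ring

/-- Spatial integral: a function bounded by `M e^{2ry}` integrates against `G²` to at most a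
constant times `(4πτ)^{-1/2}`. -/
lemma inner_integral_le {r T τ x M : ℝ} (hτ : 0 < τ) (hτT : τ ≤ T) (hx : 0 ≤ x) (hM : 0 ≤ M)
    {f : ℝ → ℝ} (hf0 : ∀ y, 0 ≤ f y) (hf : ∀ y > 0, f y ≤ M * Real.exp (2 * r * y)) :
    ∫ y in Ioi (0:ℝ), (G τ x y) ^ 2 * f y ≤
      M * (Real.exp (4 * r ^ 2 * T) * Real.exp (2 * r * x)) *
        (Real.sqrt (4 * Real.pi * τ))⁻¹ := by
  set A := M * (Real.exp (4 * r ^ 2 * T) * Real.exp (2 * r * x)) with hA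
  set g : ℝ → ℝ := fun y =>
    A * ((4 * Real.pi * τ)⁻¹ * Real.exp (-(1 / (4 * τ)) * (y - x) ^ 2)) with hg
  have hA0 : 0 ≤ A := by positivity
  have hb : 0 < 1 / (4 * τ) := by positivity
  have hgi : Integrable g :=
    (((integrable_exp_neg_mul_sq hb).comp_sub_right x).const_mul _).const_mul _
  have hgint : ∫ y, g y = A * (Real.sqrt (4 * Real.pi * τ))⁻¹ := by
    rw [hg, integral_const_mul, integral_const_mul,
      integral_sub_right_eq_self (fun y => Real.exp (-(1 / (4 * τ)) * y ^ 2)) x, integral_gaussian]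
    have h : Real.pi / (1 / (4 * τ)) = 4 * Real.pi * τ := by field_simp
    have hs : 0 < Real.sqrt (4 * Real.pi * τ) := by positivity
    have hs2 : Real.sqrt (4 * Real.pi * τ) ^ 2 = 4 * Real.pi * τ := Real.sq_sqrt (by positivity)
    rw [h]
    congr 1
    nth_rewrite 1 [← hs2]
    field_simp
  calc ∫ y in Ioi (0:ℝ), (G τ x y) ^ 2 * f y
      ≤ ∫ y in Ioi (0:ℝ), g y := by
        refine integral_mono_of_nonneg (ae_of_all _ fun y => mul_nonneg (sq_nonneg _) (hf0 y))
          hgi.integrableOn ?_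
        filter_upwards [ae_restrict_mem measurableSet_Ioi] with y hy
        have hy : 0 < y := hy
        calc (G τ x y) ^ 2 * f y ≤ (G τ x y) ^ 2 * (M * Real.exp (2 * r * y)) := by
              gcongr
              exact hf y hy
          _ = M * ((G τ x y) ^ 2 * Real.exp (2 * r * y)) := by ring
          _ ≤ M * ((Real.exp (4 * r ^ 2 * T) * Real.exp (2 * r * x)) *
                ((4 * Real.pi * τ)⁻¹ * Real.exp (-(1 / (4 * τ)) * (y - x) ^ 2))) := by
              exact mul_le_mul_of_nonneg_left (G_sq_mul_exp_le hτ hτT hx hy.le) hM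
          _ = g y := by rw [hg, hA]; ring
    _ ≤ ∫ y, g y := setIntegral_le_integral hgi (ae_of_all _ fun y => by positivity)
    _ = _ := hgint

lemma inv_sqrt_eq (t s : ℝ) (hs : s ≤ t) :
    (Real.sqrt (4 * Real.pi * (t - s)))⁻¹ =
      (Real.sqrt (4 * Real.pi))⁻¹ * (t - s) ^ (-(1 / 2) : ℝ) := by
  rw [Real.sqrt_mul (by positivity), mul_inv, Real.rpow_neg (by linarith), Real.sqrt_eq_rpow (t - s)]

lemma integrableOn_inv_sqrt {t : ℝ} (ht : 0 ≤ t) :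
    IntegrableOn (fun s => (Real.sqrt (4 * Real.pi * (t - s)))⁻¹) (Ioc 0 t) := by
  have h := (intervalIntegral.intervalIntegrable_rpow' (a := 0) (b := t)
    (r := (-(1 / 2) : ℝ)) (by norm_num)).comp_sub_left t
  rw [sub_zero, sub_self] at h
  have h2 := ((intervalIntegrable_iff_integrableOn_Ioc_of_le ht).1 h.symm).const_mul
    (Real.sqrt (4 * Real.pi))⁻¹
  exact IntegrableOn.congr_fun h2 (fun s hs => (inv_sqrt_eq t s hs.2).symm) measurableSet_Ioc

lemma integral_inv_sqrt {t : ℝ} (ht : 0 ≤ t) :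
    ∫ s in Ioc 0 t, (Real.sqrt (4 * Real.pi * (t - s)))⁻¹ = Real.sqrt (t / Real.pi) := by
  rw [setIntegral_congr_fun measurableSet_Ioc (fun s hs => inv_sqrt_eq t s hs.2),
    integral_const_mul, ← intervalIntegral.integral_of_le ht,
    intervalIntegral.integral_comp_sub_left (fun s => s ^ (-(1 / 2) : ℝ)) t,
    sub_self, sub_zero, integral_rpow (Or.inl (by norm_num))]
  have h1 : (-(1 / 2) : ℝ) + 1 = 1 / 2 := by norm_num
  have h4 : Real.sqrt 4 = 2 := by
    rw [show (4:ℝ) = 2 ^ 2 by norm_num]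
    exact Real.sqrt_sq (by norm_num)
  rw [h1, Real.zero_rpow (by norm_num), ← Real.sqrt_eq_rpow, Real.sqrt_mul (by norm_num), h4,
    Real.sqrt_div ht]
  have : 0 < Real.sqrt Real.pi := Real.sqrt_pos.2 Real.pi_pos
  field_simp
  ring

/-- The linear growth of `σ` turns the weighted bound on `u` into one for `σ(·, u)²`. -/
lemma sigma_sq_le {r T R : ℝ} (hR : 0 < R) {σ : ℝ → ℝ → ℝ}
    (hσ : ∀ x ≥ (0:ℝ), ∀ u : ℝ, |σ x u| ≤ R * (Real.exp (r * x) + |u|)) {u : ℝ → ℝ → ℝ}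
    (hu : CrBdd r T u) {s y : ℝ} (hs : s ∈ Icc 0 T) (hy : 0 ≤ y) :
    |σ y (u s y)| ^ 2 ≤ 2 * R ^ 2 * (1 + (CrNorm r T u) ^ 2) * Real.exp (2 * r * y) := by
  set N := CrNorm r T u with hN
  have h1 : Real.exp (-r * y) * |u s y| ≤ N := le_csSup hu ⟨(s, y), ⟨hs, hy⟩, rfl⟩
  have h2 : |u s y| ≤ N * Real.exp (r * y) := by
    calc |u s y| = (Real.exp (-r * y) * |u s y|) * Real.exp (r * y) := by
          rw [mul_right_comm, ← Real.exp_add]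
          simp
      _ ≤ _ := by gcongr
  have h3 : |σ y (u s y)| ≤ R * ((1 + N) * Real.exp (r * y)) := by
    refine (hσ y hy _).trans ?_
    gcongr
    linarith
  have h4 : Real.exp (2 * r * y) = Real.exp (r * y) ^ 2 := by
    rw [← Real.exp_nat_mul]
    congr 1
    push_cast
    ring
  calc |σ y (u s y)| ^ 2 ≤ (R * ((1 + N) * Real.exp (r * y))) ^ 2 := by gcongr
    _ = R ^ 2 * Real.exp (r * y) ^ 2 * (1 + N) ^ 2 := by ring
    _ ≤ R ^ 2 * Real.exp (r * y) ^ 2 * (2 * (1 + N ^ 2)) := by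
        gcongr
        nlinarith [sq_nonneg (1 - N)]
    _ = _ := by rw [h4]; ring

/-- as in (4.7) of the paper: square-kernel bound for the diffusion term. -/
theorem stmt_12 (r T p R : ℝ) (hT : 0 < T) (hp : 4 < p) (hR : 0 < R) :
    ∃ C > (0:ℝ), ∀ σ : ℝ → ℝ → ℝ,
      Measurable (Function.uncurry σ) →
      (∀ x ≥ (0:ℝ), ∀ u : ℝ, |σ x u| ≤ R * (Real.exp (r * x) + |u|)) →
      ∀ u : ℝ → ℝ → ℝ,
        ContinuousOn (Function.uncurry u) (Icc 0 T ×ˢ Ici 0) → CrBdd r T u →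
        ∀ t ∈ Icc (0:ℝ) T, ∀ x ≥ (0:ℝ),
          (∫ s in Ioc (0:ℝ) t, ∫ y in Ioi (0:ℝ),
              (G (t - s) x y) ^ 2 * |σ y (u s y)| ^ 2)
            ≤ C * Real.exp (2 * r * x) * (1 + (CrNorm r T u) ^ 2) := by
  refine ⟨2 * R ^ 2 * Real.exp (4 * r ^ 2 * T) * Real.sqrt (T / Real.pi), by positivity, ?_⟩
  intro σ _ hσ u _ hu t ht x hx
  set N := CrNorm r T u with hN
  set A := 2 * R ^ 2 * (1 + N ^ 2) * (Real.exp (4 * r ^ 2 * T) * Real.exp (2 * r * x)) with hA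
  calc (∫ s in Ioc (0:ℝ) t, ∫ y in Ioi (0:ℝ), (G (t - s) x y) ^ 2 * |σ y (u s y)| ^ 2)
      ≤ ∫ s in Ioc (0:ℝ) t, A * (Real.sqrt (4 * Real.pi * (t - s)))⁻¹ := by
        refine integral_mono_of_nonneg (ae_of_all _ fun s => integral_nonneg fun y => by positivity)
          ((integrableOn_inv_sqrt ht.1).const_mul A) ?_
        filter_upwards [ae_restrict_mem measurableSet_Ioc] with s hs
        rcases hs.2.eq_or_lt with rfl | hlt
        · -- At `s = t` both sides vanish, since `(√0)⁻¹ = 0`.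
          simp [G]
        · exact inner_integral_le (sub_pos.2 hlt) (by linarith [hs.1, ht.2]) hx (by positivity)
            (fun y => by positivity)
            (fun y hy => sigma_sq_le hR hσ hu ⟨hs.1.le, hs.2.trans ht.2⟩ hy.le)
    _ = A * Real.sqrt (t / Real.pi) := by rw [integral_const_mul, integral_inv_sqrt ht.1]
    _ ≤ A * Real.sqrt (T / Real.pi) := by
        gcongr
        exact ht.2
    _ = _ := by rw [hA]; ring
end

section
/- Let r ∈ ℝ, T > 0, p > 4, R > 0, N ≥ 1, and let σ : [0,∞)×ℝ → ℝ be measurable with |σ(x,u)| ≤ R(e^{rx}+|u|) for all x ≥ 0, u ∈ ℝ. Let u : [0,T]×[0,∞) → ℝ be continuous with ‖u‖_{C_r^T} < ∞, let h ∈ L²([0,T]×[0,∞)) with ∫_0^T∫_0^∞ h(s,y)² dy ds ≤ N², and define F(t,x) := ∫_0^t ∫_0^∞ G(t−s,x,y) σ(y,u(s,y)) h(s,y) dy ds. Then there exists a constant C = C(r,p,T) > 0 such that for all s ∈ [0,T] and all x, y ≥ 0, | e^{−ry} F(s,y) − e^{−rx} F(s,x) |^p ≤ C R^p N^p T ( 1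 + ‖u‖_{C_r^T} )^p |x−y|^{(p−4)/2}. -/
/-!
Multiplying by `e^{-rx}` turns `F` into the space-time integral of the weighted kernel `Gr` against
`H(s',z) = e^{-rz} σ(z,u(s',z)) h(s',z)`, and the growth bound on `σ` gives
`‖H‖_{L²} ≤ R (1 + ‖u‖) N`. By Cauchy–Schwarz (`sq_integral_mul_le`) the claim reduces to an `L²`
bound for `Gr(s-s',y,z) - Gr(s-s',x,z)` in `(s',z)`.

The kernel is a difference of two exponentially tilted Gaussians, up to prefactors bounded by `1`
on the half-line (`Gr_eq`, `abs_reflected_sub_le`). Completing the square, two translates at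
distance `d` of a tilted Gaussian differ in `L²(ℝ)` by exactly `2E (1 - e^{-d²/(8t)})` with
`E ≲ t^{-1/2}` (`integral_tiltedGauss_sub_sq`). Since `1 - e^{-v} ≤ v^θ`, the spatial `L²` norm
squared of the kernel difference is at most `K d^{2θ} t^{-1/2-θ}` (`lintegral_Gr_sub_sq_le`), which
is integrable in time for `θ < 1/2`. The choice `θ = (p-4)/(2p)` gives the exponent `(p-4)/2` after
raising to the power `p/2`. Square integrability of `Gr(s-s',x,z)` itself is the case where one of
the two points is `0`, where the kernel vanishes.
-/


open MeasureTheory Real Set Filter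

/-! ### Tilted Gaussians and their translates -/

/-- Exponentially tilted Gaussian `(4πt)^{-1/2} e^{-ρw - w²/(4t)}`. -/
noncomputable def tiltedGauss (ρ t w : ℝ) : ℝ :=
  (Real.sqrt (4 * Real.pi * t))⁻¹ * Real.exp (-ρ * w - w ^ 2 / (4 * t))

/-- The squared `L²(ℝ)` norm of `tiltedGauss ρ t`, for `t > 0`. -/
noncomputable def tiltedEnergy (ρ t : ℝ) : ℝ :=
  (4 * Real.pi * t)⁻¹ * Real.sqrt (2 * Real.pi * t) * Real.exp (2 * ρ ^ 2 * t)

lemma tiltedGauss_nonneg (ρ t w : ℝ) : 0 ≤ tiltedGauss ρ t w := by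
  unfold tiltedGauss; positivity

/-- Completing the square in a product of two translates. -/
lemma tiltedGauss_mul (ρ t a b z : ℝ) (ht : 0 < t) :
    tiltedGauss ρ t (a + z) * tiltedGauss ρ t (b + z) =
      (4 * Real.pi * t)⁻¹ * Real.exp (2 * ρ ^ 2 * t) * Real.exp (-(a - b) ^ 2 / (8 * t)) *
        Real.exp (-(1 / (2 * t)) * (z + ((a + b) / 2 + 2 * ρ * t)) ^ 2) := by
  unfold tiltedGauss
  have h1 : (Real.sqrt (4 * Real.pi * t))⁻¹ * (Real.sqrt (4 * Real.pi * t))⁻¹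
      = (4 * Real.pi * t)⁻¹ := by
    rw [← mul_inv, Real.mul_self_sqrt (by positivity)]
  rw [mul_mul_mul_comm, h1, ← Real.exp_add, mul_assoc ((4 * Real.pi * t)⁻¹), mul_assoc ((4 * Real.pi * t)⁻¹),
    ← Real.exp_add, ← Real.exp_add]
  congr 2
  field_simp
  ring

lemma integrable_tiltedGauss_mul (ρ t a b : ℝ) (ht : 0 < t) :
    Integrable (fun z => tiltedGauss ρ t (a + z) * tiltedGauss ρ t (b + z)) := by
  simp_rw [tiltedGauss_mul ρ t a b _ ht]
  exact ((integrable_exp_neg_mul_sq (b := 1 / (2 * t)) (by positivity)).comp_add_right _).const_mul _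

lemma integral_tiltedGauss_mul (ρ t a b : ℝ) (ht : 0 < t) :
    ∫ z, tiltedGauss ρ t (a + z) * tiltedGauss ρ t (b + z) =
      tiltedEnergy ρ t * Real.exp (-(a - b) ^ 2 / (8 * t)) := by
  simp_rw [tiltedGauss_mul ρ t a b _ ht]
  rw [integral_const_mul,
    integral_add_right_eq_self (fun z => Real.exp (-(1 / (2 * t)) * z ^ 2)), integral_gaussian]
  have : Real.pi / (1 / (2 * t)) = 2 * Real.pi * t := by field_simp
  rw [this, tiltedEnergy]
  ring

lemma integrable_tiltedGauss_sub_sq (ρ t a b : ℝ) (ht : 0 < t) :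
    Integrable (fun z => (tiltedGauss ρ t (a + z) - tiltedGauss ρ t (b + z)) ^ 2) := by
  have h1 := integrable_tiltedGauss_mul ρ t a a ht
  have h2 := integrable_tiltedGauss_mul ρ t a b ht
  have h3 := integrable_tiltedGauss_mul ρ t b b ht
  refine ((h1.sub (h2.const_mul 2)).add h3).congr (Eventually.of_forall fun z => ?_)
  simp only [Pi.add_apply, Pi.sub_apply]
  ring

lemma integral_tiltedGauss_sub_sq (ρ t a b : ℝ) (ht : 0 < t) :
    ∫ z, (tiltedGauss ρ t (a + z) - tiltedGauss ρ t (b + z)) ^ 2 =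
      2 * tiltedEnergy ρ t * (1 - Real.exp (-(a - b) ^ 2 / (8 * t))) := by
  have h1 := integrable_tiltedGauss_mul ρ t a a ht
  have h2 := integrable_tiltedGauss_mul ρ t a b ht
  have h3 := integrable_tiltedGauss_mul ρ t b b ht
  have h12 : Integrable (fun z => tiltedGauss ρ t (a + z) * tiltedGauss ρ t (a + z)
      - 2 * (tiltedGauss ρ t (a + z) * tiltedGauss ρ t (b + z))) := h1.sub (h2.const_mul 2)
  have e : ∀ z, (tiltedGauss ρ t (a + z) - tiltedGauss ρ t (b + z)) ^ 2 =
      (tiltedGauss ρ t (a + z) * tiltedGauss ρ t (a + z)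
        - 2 * (tiltedGauss ρ t (a + z) * tiltedGauss ρ t (b + z)))
        + tiltedGauss ρ t (b + z) * tiltedGauss ρ t (b + z) := fun z => by ring
  simp_rw [e]
  rw [integral_add h12 h3, integral_sub h1 (h2.const_mul 2),
    integral_const_mul, integral_tiltedGauss_mul _ _ _ _ ht, integral_tiltedGauss_mul _ _ _ _ ht,
    integral_tiltedGauss_mul _ _ _ _ ht]
  simp
  ring

lemma tiltedEnergy_le (ρ t T : ℝ) (ht : 0 < t) (htT : t ≤ T) :
    tiltedEnergy ρ t ≤ Real.exp (2 * ρ ^ 2 * T) * t ^ (-(1 / 2) : ℝ) := by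
  unfold tiltedEnergy
  have h1 : (4 * Real.pi * t)⁻¹ * Real.sqrt (2 * Real.pi * t) ≤ t ^ (-(1 / 2) : ℝ) := by
    rw [Real.rpow_neg ht.le, ← Real.sqrt_eq_rpow, inv_mul_le_iff₀ (by positivity),
      ← div_eq_mul_inv, le_div_iff₀ (by positivity), ← Real.sqrt_mul (by positivity)]
    refine Real.sqrt_le_iff.mpr ⟨by positivity, ?_⟩
    have := Real.pi_gt_three
    have : 0 < Real.pi * t ^ 2 := by positivity
    nlinarith
  have h2 : Real.exp (2 * ρ ^ 2 * t) ≤ Real.exp (2 * ρ ^ 2 * T) := by gcongr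
  calc _ ≤ t ^ (-(1 / 2) : ℝ) * Real.exp (2 * ρ ^ 2 * T) := by gcongr
    _ = _ := mul_comm _ _

/-! ### Elementary inequalities -/

lemma min_one_le_rpow {v θ : ℝ} (hv : 0 ≤ v) (h0 : 0 < θ) (h1 : θ ≤ 1) : min 1 v ≤ v ^ θ := by
  rcases le_total v 1 with h | h
  · rw [min_eq_right h]
    simpa using Real.rpow_le_rpow_of_exponent_ge' hv h h0.le h1
  · rw [min_eq_left h]
    exact Real.one_le_rpow h h0.le

lemma one_sub_exp_neg_le_rpow {v θ : ℝ} (hv : 0 ≤ v) (h0 : 0 < θ) (h1 : θ ≤ 1) :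
    1 - Real.exp (-v) ≤ v ^ θ := by
  refine le_trans (le_min ?_ ?_) (min_one_le_rpow hv h0 h1)
  · linarith [Real.exp_pos (-v)]
  · linarith [Real.add_one_le_exp (-v)]

lemma abs_exp_neg_sub_le (a b : ℝ) (ha : 0 ≤ a) (hb : 0 ≤ b) :
    |Real.exp (-a) - Real.exp (-b)| ≤ min 1 |a - b| := by
  wlog hab : a ≤ b generalizing a b
  · rw [abs_sub_comm, abs_sub_comm a b]
    exact this b a hb ha (le_of_not_ge hab)
  have h1 : Real.exp (-b) ≤ Real.exp (-a) := by gcongr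
  have h2 : Real.exp (-a) ≤ 1 := Real.exp_le_one_iff.mpr (by linarith)
  have h3 : Real.exp (-b) = Real.exp (-a) * Real.exp (-(b - a)) := by
    rw [← Real.exp_add]; congr 1; ring
  have h4 := Real.add_one_le_exp (-(b - a))
  rw [abs_of_nonneg (by linarith), abs_of_nonpos (by linarith : a - b ≤ 0)]
  refine le_min (by linarith [Real.exp_pos (-b)]) ?_
  rw [h3]
  nlinarith [Real.exp_pos (-a), Real.exp_pos (-(b - a))]

/-! ### Spatial increments of the weighted kernel -/

lemma Gr_eq (r t x z : ℝ) : Gr r t x z = tiltedGauss (-r) t (-x + z) -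
    (Real.sqrt (4 * Real.pi * t))⁻¹ * Real.exp (-r * (x - z) - (x + z) ^ 2 / (4 * t)) := by
  unfold Gr G tiltedGauss
  have e1 : Real.exp (-(-r) * (-x + z) - (-x + z) ^ 2 / (4 * t)) =
      Real.exp (-r * (x - z)) * Real.exp (-(x - z) ^ 2 / (4 * t)) := by
    rw [← Real.exp_add]; congr 1; ring
  have e2 : Real.exp (-r * (x - z) - (x + z) ^ 2 / (4 * t)) =
      Real.exp (-r * (x - z)) * Real.exp (-(x + z) ^ 2 / (4 * t)) := by
    rw [← Real.exp_add]; congr 1; ring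
  rw [e1, e2]
  ring

/-- The reflected part `e^{-r(x-z)} g_t(x+z)` of `Gr` is `e^{-2rx}` (if `r ≥ 0`) or `e^{2rz}`
(if `r ≤ 0`) times a tilted Gaussian; on the half-line these prefactors are at most `1`. -/
lemma abs_reflected_sub_le (r t x y z : ℝ) (hx : 0 ≤ x) (hy : 0 ≤ y) (hz : 0 ≤ z) :
    |(Real.sqrt (4 * Real.pi * t))⁻¹ * Real.exp (-r * (y - z) - (y + z) ^ 2 / (4 * t)) -
      (Real.sqrt (4 * Real.pi * t))⁻¹ * Real.exp (-r * (x - z) - (x + z) ^ 2 / (4 * t))| ≤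
    |tiltedGauss (-|r|) t (y + z) - tiltedGauss (-|r|) t (x + z)| +
      min 1 (2 * |r| * |x - y|) * tiltedGauss (-|r|) t (y + z) := by
  rcases le_total 0 r with hr | hr
  · have e : ∀ x : ℝ, (Real.sqrt (4 * Real.pi * t))⁻¹ *
        Real.exp (-r * (x - z) - (x + z) ^ 2 / (4 * t)) =
        Real.exp (-(2 * r * x)) * tiltedGauss (-|r|) t (x + z) := by
      intro x
      unfold tiltedGauss
      rw [mul_left_comm, ← Real.exp_add, abs_of_nonneg hr]
      congr 2; ring
    rw [e, e]
    have h1 := abs_exp_neg_sub_le (2 * r * y) (2 * r * x) (by positivity) (by positivity)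
    have h2 : |2 * r * y - 2 * r * x| = 2 * |r| * |x - y| := by
      rw [← mul_sub, abs_mul, abs_mul, abs_two, abs_sub_comm]
    rw [h2] at h1
    have h3 : Real.exp (-(2 * r * x)) ≤ 1 :=
      Real.exp_le_one_iff.mpr (by have : 0 ≤ 2 * r * x := by positivity
                                  linarith)
    have hφ := tiltedGauss_nonneg (-|r|) t (y + z)
    set φy := tiltedGauss (-|r|) t (y + z)
    set φx := tiltedGauss (-|r|) t (x + z)
    calc |Real.exp (-(2 * r * y)) * φy - Real.exp (-(2 * r * x)) * φx|
        = |Real.exp (-(2 * r * x)) * (φy - φx) +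
            (Real.exp (-(2 * r * y)) - Real.exp (-(2 * r * x))) * φy| := by congr 1; ring
      _ ≤ |Real.exp (-(2 * r * x)) * (φy - φx)| +
            |(Real.exp (-(2 * r * y)) - Real.exp (-(2 * r * x))) * φy| := abs_add_le _ _
      _ ≤ _ := by
        rw [abs_mul, abs_mul, abs_of_nonneg hφ, abs_of_pos (Real.exp_pos _)]
        gcongr
        exact mul_le_of_le_one_left (abs_nonneg _) h3
  · have e : ∀ x : ℝ, (Real.sqrt (4 * Real.pi * t))⁻¹ *
        Real.exp (-r * (x - z) - (x + z) ^ 2 / (4 * t)) =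
        Real.exp (2 * r * z) * tiltedGauss (-|r|) t (x + z) := by
      intro x
      unfold tiltedGauss
      rw [mul_left_comm, ← Real.exp_add, abs_of_nonpos hr]
      congr 2; ring
    rw [e, e, ← mul_sub, abs_mul, abs_of_pos (Real.exp_pos _)]
    have h3 : Real.exp (2 * r * z) ≤ 1 := Real.exp_le_one_iff.mpr (by nlinarith)
    have h4 := mul_le_of_le_one_left
      (abs_nonneg (tiltedGauss (-|r|) t (y + z) - tiltedGauss (-|r|) t (x + z))) h3
    have h5 : 0 ≤ min 1 (2 * |r| * |x - y|) * tiltedGauss (-|r|) t (y + z) :=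
      mul_nonneg (le_min zero_le_one (by positivity)) (tiltedGauss_nonneg _ _ _)
    linarith

lemma Gr_sub_sq_le (r t x y z : ℝ) (hx : 0 ≤ x) (hy : 0 ≤ y) (hz : 0 ≤ z) :
    (Gr r t y z - Gr r t x z) ^ 2 ≤
      3 * ((tiltedGauss (-r) t (-y + z) - tiltedGauss (-r) t (-x + z)) ^ 2 +
        (tiltedGauss (-|r|) t (y + z) - tiltedGauss (-|r|) t (x + z)) ^ 2 +
        min 1 (2 * |r| * |x - y|) ^ 2 *
          (tiltedGauss (-|r|) t (y + z) * tiltedGauss (-|r|) t (y + z))) := by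
  have h := abs_reflected_sub_le r t x y z hx hy hz
  rw [Gr_eq, Gr_eq]
  set A := tiltedGauss (-r) t (-y + z) - tiltedGauss (-r) t (-x + z) with hA
  set B := tiltedGauss (-|r|) t (y + z) - tiltedGauss (-|r|) t (x + z)
  set c := min 1 (2 * |r| * |x - y|) * tiltedGauss (-|r|) t (y + z) with hc
  set S := (Real.sqrt (4 * Real.pi * t))⁻¹ * Real.exp (-r * (y - z) - (y + z) ^ 2 / (4 * t)) -
      (Real.sqrt (4 * Real.pi * t))⁻¹ * Real.exp (-r * (x - z) - (x + z) ^ 2 / (4 * t)) with hS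
  have h1 : |A - S| ≤ |A| + |B| + c := (abs_sub A S).trans (by linarith)
  have h2 : (A - S) ^ 2 ≤ (|A| + |B| + c) ^ 2 := sq_le_sq' (by linarith [neg_abs_le (A - S)])
    ((le_abs_self _).trans h1)
  calc _ = (A - S) ^ 2 := by rw [hA, hS]; ring
    _ ≤ _ := h2
    _ ≤ 3 * (|A| ^ 2 + |B| ^ 2 + c ^ 2) := by
      nlinarith [sq_nonneg (|A| - |B|), sq_nonneg (|A| - c), sq_nonneg (|B| - c)]
    _ = _ := by rw [sq_abs, sq_abs, hc]; ring

/-- Constant in the spatial `L²` estimate of kernel differences. -/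
noncomputable def kerConst (r T θ : ℝ) : ℝ :=
  3 * Real.exp (2 * r ^ 2 * T) * (4 + (4 * r ^ 2 * T) ^ θ)

lemma kerConst_pos (r T θ : ℝ) (hT : 0 < T) : 0 < kerConst r T θ := by
  unfold kerConst; positivity

/-- Spatial `L²` estimate: `‖Gr(t,y,·) - Gr(t,x,·)‖² ≤ K t^{-1/2} (|x-y|²/t)^θ`. -/
lemma lintegral_Gr_sub_sq_le (r T θ t x y : ℝ) (hθ : 0 < θ) (hθ1 : θ ≤ 1) (ht : 0 < t)
    (htT : t ≤ T) (hx : 0 ≤ x) (hy : 0 ≤ y) :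
    ∫⁻ z in Ioi (0 : ℝ), ENNReal.ofReal ((Gr r t y z - Gr r t x z) ^ 2) ≤
      ENNReal.ofReal (kerConst r T θ * |x - y| ^ (2 * θ) * t ^ (-(1 / 2) - θ)) := by
  have i1 := integrable_tiltedGauss_sub_sq (-r) t (-y) (-x) ht
  have i2 := integrable_tiltedGauss_sub_sq (-|r|) t y x ht
  have i3 := (integrable_tiltedGauss_mul (-|r|) t y y ht).const_mul (min 1 (2 * |r| * |x - y|) ^ 2)
  have hint := ((i1.fun_add i2).fun_add i3).const_mul 3
  calc ∫⁻ z in Ioi (0 : ℝ), ENNReal.ofReal ((Gr r t y z - Gr r t x z) ^ 2)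
      ≤ ∫⁻ z in Ioi (0 : ℝ), ENNReal.ofReal (3 *
          ((tiltedGauss (-r) t (-y + z) - tiltedGauss (-r) t (-x + z)) ^ 2 +
        (tiltedGauss (-|r|) t (y + z) - tiltedGauss (-|r|) t (x + z)) ^ 2 +
        min 1 (2 * |r| * |x - y|) ^ 2 *
          (tiltedGauss (-|r|) t (y + z) * tiltedGauss (-|r|) t (y + z)))) := by
        refine setLIntegral_mono' measurableSet_Ioi fun z hz => ?_
        exact ENNReal.ofReal_le_ofReal (Gr_sub_sq_le r t x y z hx hy (le_of_lt hz))
    _ ≤ ∫⁻ z, ENNReal.ofReal (3 *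
          ((tiltedGauss (-r) t (-y + z) - tiltedGauss (-r) t (-x + z)) ^ 2 +
        (tiltedGauss (-|r|) t (y + z) - tiltedGauss (-|r|) t (x + z)) ^ 2 +
        min 1 (2 * |r| * |x - y|) ^ 2 *
          (tiltedGauss (-|r|) t (y + z) * tiltedGauss (-|r|) t (y + z)))) :=
        setLIntegral_le_lintegral _ _
    _ = ENNReal.ofReal (∫ z, 3 *
          ((tiltedGauss (-r) t (-y + z) - tiltedGauss (-r) t (-x + z)) ^ 2 +
        (tiltedGauss (-|r|) t (y + z) - tiltedGauss (-|r|) t (x + z)) ^ 2 +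
        min 1 (2 * |r| * |x - y|) ^ 2 *
          (tiltedGauss (-|r|) t (y + z) * tiltedGauss (-|r|) t (y + z)))) := by
        rw [ofReal_integral_eq_lintegral_ofReal hint]
        · refine Eventually.of_forall fun z => ?_
          have := mul_self_nonneg (tiltedGauss (-|r|) t (y + z))
          simp only [Pi.zero_apply]
          positivity
    _ ≤ _ := by
        refine ENNReal.ofReal_le_ofReal ?_
        rw [integral_const_mul, integral_add (i1.fun_add i2) i3, integral_add i1 i2,
          integral_const_mul, integral_tiltedGauss_sub_sq _ _ _ _ ht,
          integral_tiltedGauss_sub_sq _ _ _ _ ht, integral_tiltedGauss_mul _ _ _ _ ht]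
        have hd2 : (|x - y|) ^ (2 * θ) = ((x - y) ^ 2) ^ θ := by
          rw [Real.rpow_mul (abs_nonneg _), ← sq_abs (x - y), Real.rpow_two]
        set d2 := (x - y) ^ 2 with hd
        have hd0 : 0 ≤ d2 := sq_nonneg _
        have hE1 := tiltedEnergy_le (-r) t T ht htT
        have hE2 := tiltedEnergy_le (-|r|) t T ht htT
        rw [neg_sq] at hE1 hE2
        rw [sq_abs] at hE2
        have hexp : 1 - Real.exp (-(d2 / (8 * t))) ≤ (d2 / t) ^ θ := by
          refine (one_sub_exp_neg_le_rpow (by positivity) hθ hθ1).trans ?_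
          gcongr
          linarith
        have hexp0 : 0 ≤ 1 - Real.exp (-(d2 / (8 * t))) := by
          have : Real.exp (-(d2 / (8 * t))) ≤ 1 :=
            Real.exp_le_one_iff.mpr (neg_nonpos.mpr (by positivity))
          linarith
        have hmin : min 1 (2 * |r| * |x - y|) ^ 2 ≤ (4 * r ^ 2 * T) ^ θ * (d2 / t) ^ θ := by
          have h1 : min 1 (2 * |r| * |x - y|) ^ 2 ≤ min 1 (4 * r ^ 2 * d2) := by
            have h0 : 0 ≤ min 1 (2 * |r| * |x - y|) := le_min zero_le_one (by positivity)
            refine le_min (pow_le_one₀ h0 (min_le_left _ _)) ?_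
            calc _ ≤ (2 * |r| * |x - y|) ^ 2 := by gcongr; exact min_le_right _ _
              _ = _ := by rw [mul_pow, mul_pow, sq_abs, sq_abs]; norm_num [hd]
          refine (h1.trans (min_one_le_rpow (by positivity) hθ hθ1)).trans ?_
          have hT : 0 ≤ T := ht.le.trans htT
          rw [← Real.mul_rpow (by positivity) (by positivity)]
          refine Real.rpow_le_rpow (by positivity) ?_ hθ.le
          rw [mul_assoc (4 * r ^ 2)]
          refine mul_le_mul_of_nonneg_left ?_ (by positivity)
          rw [← mul_div_assoc, le_div_iff₀ ht, mul_comm T]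
          gcongr
        have ea : -(-y - -x) ^ 2 / (8 * t) = -(d2 / (8 * t)) := by rw [hd]; ring
        have eb : -(y - x) ^ 2 / (8 * t) = -(d2 / (8 * t)) := by rw [hd]; ring
        have ec : -(y - y) ^ 2 / (8 * t) = 0 := by simp
        rw [ea, eb, ec, Real.exp_zero, mul_one]
        have hrhs : kerConst r T θ * |x - y| ^ (2 * θ) * t ^ (-(1 / 2) - θ) =
            3 * (2 * (Real.exp (2 * r ^ 2 * T) * t ^ (-(1 / 2) : ℝ)) * (d2 / t) ^ θ +
              2 * (Real.exp (2 * r ^ 2 * T) * t ^ (-(1 / 2) : ℝ)) * (d2 / t) ^ θ +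
              ((4 * r ^ 2 * T) ^ θ * (d2 / t) ^ θ) *
                (Real.exp (2 * r ^ 2 * T) * t ^ (-(1 / 2) : ℝ))) := by
          rw [hd2, Real.rpow_sub ht, Real.div_rpow hd0 ht.le, kerConst]
          ring
        rw [hrhs]
        have e0 : 0 ≤ tiltedEnergy (-|r|) t := by unfold tiltedEnergy; positivity
        have e1 : 0 ≤ (4 * r ^ 2 * T) ^ θ * (d2 / t) ^ θ := (sq_nonneg _).trans hmin
        gcongr

/-! ### Space-time estimates -/

lemma Gr_zero_time (r x z : ℝ) : Gr r 0 x z = 0 := by simp [Gr, G]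

lemma Gr_zero_left (r t z : ℝ) : Gr r t 0 z = 0 := by simp [Gr, G]

lemma measurable_Gr (r s x : ℝ) : Measurable (fun q : ℝ × ℝ => Gr r (s - q.1) x q.2) := by
  unfold Gr G
  fun_prop

lemma integrableOn_time (s β : ℝ) (hs : 0 ≤ s) (hβ : -1 < β) :
    IntegrableOn (fun s' => (s - s') ^ β) (Ioc 0 s) := by
  have h := (intervalIntegral.intervalIntegrable_rpow' (a := 0) (b := s) hβ).comp_sub_left s
  simp only [sub_zero, sub_self] at h
  exact (intervalIntegrable_iff_integrableOn_Ioc_of_le hs).mp h.symm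

lemma integral_time (s β : ℝ) (hs : 0 ≤ s) (hβ : -1 < β) :
    ∫ s' in Ioc 0 s, (s - s') ^ β = s ^ (β + 1) / (β + 1) := by
  rw [← intervalIntegral.integral_of_le hs,
    intervalIntegral.integral_comp_sub_left (fun v => v ^ β), sub_self, sub_zero,
    integral_rpow (Or.inl hβ), Real.zero_rpow (by linarith), sub_zero]

/-- Space-time `L²` estimate for kernel differences. -/
lemma lintegral_Gr_prod_le (r T θ s x y : ℝ) (hθ : 0 < θ) (hθ1 : θ < 1 / 2)
    (hs : 0 ≤ s) (hsT : s ≤ T) (hx : 0 ≤ x) (hy : 0 ≤ y) (hT : 0 < T) :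
    ∫⁻ q in Ioc (0 : ℝ) s ×ˢ Ioi (0 : ℝ),
        ENNReal.ofReal ((Gr r (s - q.1) y q.2 - Gr r (s - q.1) x q.2) ^ 2) ≤
      ENNReal.ofReal (kerConst r T θ * (T ^ (1 / 2 - θ) / (1 / 2 - θ)) * |x - y| ^ (2 * θ)) := by
  have hK := kerConst_pos r T θ hT
  rw [Measure.volume_eq_prod, ← Measure.prod_restrict, lintegral_prod]
  swap
  · exact (((measurable_Gr r s y).sub (measurable_Gr r s x)).pow_const 2).ennreal_ofReal.aemeasurable
  have hβ : -1 < -(1 / 2) - θ := by linarith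
  calc _ ≤ ∫⁻ s' in Ioc (0 : ℝ) s, ENNReal.ofReal
        (kerConst r T θ * |x - y| ^ (2 * θ) * (s - s') ^ (-(1 / 2) - θ)) := by
        refine setLIntegral_mono' measurableSet_Ioc fun s' hs' => ?_
        rcases hs'.2.eq_or_lt with h | h
        · simp [h, Gr_zero_time]
        · exact lintegral_Gr_sub_sq_le r T θ (s - s') x y hθ (by linarith) (by linarith)
            (by linarith [hs'.1]) hx hy
    _ = ENNReal.ofReal (∫ s' in Ioc (0 : ℝ) s,
        kerConst r T θ * |x - y| ^ (2 * θ) * (s - s') ^ (-(1 / 2) - θ)) := by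
        rw [ofReal_integral_eq_lintegral_ofReal]
        · exact (integrableOn_time s _ hs hβ).const_mul _
        · filter_upwards [ae_restrict_mem measurableSet_Ioc] with s' hs'
          have : 0 ≤ s - s' := by linarith [hs'.2]
          simp only [Pi.zero_apply]
          positivity
    _ ≤ _ := by
        refine ENNReal.ofReal_le_ofReal ?_
        rw [integral_const_mul, integral_time s _ hs hβ]
        have e : -(1 / 2) - θ + 1 = 1 / 2 - θ := by ring
        rw [e]
        have h1 : s ^ (1 / 2 - θ) ≤ T ^ (1 / 2 - θ) :=
          Real.rpow_le_rpow hs hsT (by linarith)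
        have h2 : 0 < 1 / 2 - θ := by linarith
        calc _ ≤ kerConst r T θ * |x - y| ^ (2 * θ) * (T ^ (1 / 2 - θ) / (1 / 2 - θ)) := by gcongr
          _ = _ := by ring

lemma memLp_Gr_sub (r T s x y : ℝ)
    (hs : 0 ≤ s) (hsT : s ≤ T) (hx : 0 ≤ x) (hy : 0 ≤ y) (hT : 0 < T) :
    MemLp (fun q : ℝ × ℝ => Gr r (s - q.1) y q.2 - Gr r (s - q.1) x q.2) 2
      (volume.restrict (Ioc (0 : ℝ) s ×ˢ Ioi (0 : ℝ))) := by
  have hm := (measurable_Gr r s y).fun_sub (measurable_Gr r s x)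
  refine (memLp_two_iff_integrable_sq hm.aestronglyMeasurable).mpr
    ⟨(hm.pow_const 2).aestronglyMeasurable, ?_⟩
  rw [hasFiniteIntegral_iff_ofReal (Eventually.of_forall fun q => sq_nonneg _)]
  exact (lintegral_Gr_prod_le r T (1 / 4) s x y (by norm_num) (by norm_num) hs hsT hx hy
    hT).trans_lt ENNReal.ofReal_lt_top

lemma memLp_Gr (r T s x : ℝ)
    (hs : 0 ≤ s) (hsT : s ≤ T) (hx : 0 ≤ x) (hT : 0 < T) :
    MemLp (fun q : ℝ × ℝ => Gr r (s - q.1) x q.2) 2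
      (volume.restrict (Ioc (0 : ℝ) s ×ˢ Ioi (0 : ℝ))) := by
  simpa [Gr_zero_left] using memLp_Gr_sub r T s 0 x hs hsT le_rfl hx hT

lemma integral_Gr_prod_le (r T θ s x y : ℝ) (hθ : 0 < θ) (hθ1 : θ < 1 / 2)
    (hs : 0 ≤ s) (hsT : s ≤ T) (hx : 0 ≤ x) (hy : 0 ≤ y) (hT : 0 < T) :
    ∫ q in Ioc (0 : ℝ) s ×ˢ Ioi (0 : ℝ),
        (Gr r (s - q.1) y q.2 - Gr r (s - q.1) x q.2) ^ 2 ≤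
      kerConst r T θ * (T ^ (1 / 2 - θ) / (1 / 2 - θ)) * |x - y| ^ (2 * θ) := by
  have hm := (measurable_Gr r s y).fun_sub (measurable_Gr r s x)
  rw [integral_eq_lintegral_of_nonneg_ae (Eventually.of_forall fun q => sq_nonneg _)
    (hm.pow_const 2).aestronglyMeasurable]
  have := kerConst_pos r T θ hT
  have h2 : 0 < 1 / 2 - θ := by linarith
  exact ENNReal.toReal_le_of_le_ofReal (by positivity)
    (lintegral_Gr_prod_le r T θ s x y hθ hθ1 hs hsT hx hy hT)

/-- Cauchy–Schwarz for real functions, in squared form. -/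
lemma sq_integral_mul_le {α : Type*} [MeasurableSpace α] {μ : Measure α} {f g : α → ℝ}
    (hf : MemLp f 2 μ) (hg : MemLp g 2 μ) :
    (∫ a, f a * g a ∂μ) ^ 2 ≤ (∫ a, f a ^ 2 ∂μ) * ∫ a, g a ^ 2 ∂μ := by
  have hfg : Integrable (fun a => f a * g a) μ := hf.integrable_mul hg
  have hf2 := hf.integrable_sq
  have hg2 := hg.integrable_sq
  -- The quadratic polynomial `c ↦ ∫ (c f + g)²` is nonnegative, so its discriminant is `≤ 0`.
  have key : ∀ c : ℝ, 0 ≤ (∫ a, f a ^ 2 ∂μ) * (c * c) + (2 * ∫ a, f a * g a ∂μ) * c +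
      ∫ a, g a ^ 2 ∂μ := by
    intro c
    have h0 : 0 ≤ ∫ a, (c * f a + g a) ^ 2 ∂μ := integral_nonneg fun a => sq_nonneg _
    have e : ∀ a, (c * f a + g a) ^ 2 = (c * c * f a ^ 2 + 2 * c * (f a * g a)) + g a ^ 2 :=
      fun a => by ring
    simp_rw [e] at h0
    rw [integral_add ((hf2.const_mul _).fun_add (hfg.const_mul _)) hg2,
      integral_add (hf2.const_mul _) (hfg.const_mul _), integral_const_mul,
      integral_const_mul] at h0
    linarith
  have := discrim_le_zero key
  unfold discrim at this
  linarith

/-! ### Hölder continuity of the convolution -/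

/-- as in (4.13) of the paper: spatial Hölder continuity of the weighted
convolution `F`. -/
theorem stmt_14 (r T p : ℝ) (hT : 0 < T) (hp : 4 < p) :
    ∃ C > (0:ℝ), ∀ R N : ℝ, 0 < R → 1 ≤ N →
      ∀ σ : ℝ → ℝ → ℝ,
        Measurable (Function.uncurry σ) →
        (∀ x ≥ (0:ℝ), ∀ u : ℝ, |σ x u| ≤ R * (Real.exp (r * x) + |u|)) →
      ∀ u : ℝ → ℝ → ℝ,
        ContinuousOn (Function.uncurry u) (Icc 0 T ×ˢ Ici 0) → CrBdd r T u →
      ∀ h : ℝ → ℝ → ℝ,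
        Measurable (Function.uncurry h) →
        IntegrableOn (fun q : ℝ × ℝ => (h q.1 q.2) ^ 2) (Ioc 0 T ×ˢ Ioi 0) →
        (∫ q in (Ioc (0:ℝ) T ×ˢ Ioi (0:ℝ)), (h q.1 q.2) ^ 2) ≤ N ^ 2 →
      ∀ s ∈ Icc (0:ℝ) T, ∀ x ≥ (0:ℝ), ∀ y ≥ (0:ℝ),
        |Real.exp (-r * y) *
              (∫ s' in Ioc (0:ℝ) s, ∫ z in Ioi (0:ℝ), G (s - s') y z * σ z (u s' z) * h s' z) -
            Real.exp (-r * x) *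
              (∫ s' in Ioc (0:ℝ) s, ∫ z in Ioi (0:ℝ), G (s - s') x z * σ z (u s' z) * h s' z)| ^ p
          ≤ C * R ^ p * N ^ p * T * (1 + CrNorm r T u) ^ p * |x - y| ^ ((p - 4) / 2) := by
  -- `θ` is half the Hölder exponent needed for the squared increment; `p > 4` gives `0 < θ < 1/2`.
  set θ : ℝ := (p - 4) / (2 * p) with hθdef
  have hp0 : 0 < p := by linarith
  have hθ : 0 < θ := div_pos (by linarith) (by linarith)
  have hθ1 : θ < 1 / 2 := by
    rw [hθdef, div_lt_iff₀ (by linarith)]; linarith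
  obtain ⟨K, hKdef⟩ : ∃ K, K = kerConst r T θ * (T ^ (1 / 2 - θ) / (1 / 2 - θ)) := ⟨_, rfl⟩
  have hK : 0 < K := by
    have := kerConst_pos r T θ hT
    have h2 : 0 < 1 / 2 - θ := by linarith
    rw [hKdef]
    positivity
  refine ⟨K ^ (p / 2) / T, by positivity, ?_⟩
  intro R N hR hN σ hσ hσb u hu hub h hh hhi hhN s hs x hx y hy
  set M := CrNorm r T u with hM
  have hMb : ∀ t ∈ Icc (0 : ℝ) T, ∀ z ≥ (0 : ℝ), Real.exp (-r * z) * |u t z| ≤ M := fun t ht z hz =>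
    le_csSup hub ⟨(t, z), ⟨ht, hz⟩, rfl⟩
  have hM0 : 0 ≤ M := le_trans (by positivity) (hMb 0 ⟨le_rfl, hT.le⟩ 0 le_rfl)
  set D : Set (ℝ × ℝ) := Ioc (0 : ℝ) s ×ˢ Ioi (0 : ℝ) with hD
  have hDm : MeasurableSet D := measurableSet_Ioc.prod measurableSet_Ioi
  have hDsub : D ⊆ Ioc (0 : ℝ) T ×ˢ Ioi (0 : ℝ) :=
    prod_mono (Ioc_subset_Ioc_right hs.2) subset_rfl
  have hDsub' : D ⊆ Icc (0 : ℝ) T ×ˢ Ici (0 : ℝ) :=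
    hDsub.trans (prod_mono Ioc_subset_Icc_self Ioi_subset_Ici_self)
  set H : ℝ × ℝ → ℝ := fun q => Real.exp (-r * q.2) * (σ q.2 (u q.1 q.2) * h q.1 q.2) with hH
  have hHm : AEStronglyMeasurable H (volume.restrict D) := by
    have hum : AEMeasurable (Function.uncurry u) (volume.restrict D) :=
      (hu.mono hDsub').aemeasurable hDm
    have hσm : AEMeasurable (fun q : ℝ × ℝ => σ q.2 (u q.1 q.2)) (volume.restrict D) :=
      hσ.comp_aemeasurable (measurable_snd.aemeasurable.prodMk hum)
    have he : Measurable (fun q : ℝ × ℝ => Real.exp (-r * q.2)) := by fun_prop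
    exact (he.aemeasurable.mul (hσm.mul hh.aemeasurable)).aestronglyMeasurable
  have hHb : ∀ q ∈ D, H q ^ 2 ≤ (R * (1 + M)) ^ 2 * h q.1 q.2 ^ 2 := by
    intro q hq
    have hq' := hDsub' hq
    have h1 : Real.exp (-r * q.2) * |σ q.2 (u q.1 q.2)| ≤ R * (1 + M) := by
      calc _ ≤ Real.exp (-r * q.2) * (R * (Real.exp (r * q.2) + |u q.1 q.2|)) := by
            gcongr; exact hσb _ hq'.2 _
        _ = R * (Real.exp (-r * q.2) * Real.exp (r * q.2) +
              Real.exp (-r * q.2) * |u q.1 q.2|) := by ring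
        _ ≤ R * (1 + M) := by
            rw [← Real.exp_add]
            have := hMb q.1 hq'.1 q.2 hq'.2
            simp only [neg_mul, neg_add_cancel, Real.exp_zero] at this ⊢
            gcongr
    have h2 : H q ^ 2 = (Real.exp (-r * q.2) * |σ q.2 (u q.1 q.2)|) ^ 2 * h q.1 q.2 ^ 2 := by
      rw [hH, mul_pow, mul_pow, mul_pow, sq_abs]; ring
    rw [h2]
    gcongr
  have hhi' : IntegrableOn (fun q : ℝ × ℝ => (h q.1 q.2) ^ 2) D := hhi.mono_set hDsub
  have hH2 : IntegrableOn (fun q => H q ^ 2) D := by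
    refine (hhi'.const_mul ((R * (1 + M)) ^ 2)).mono' (hHm.pow 2) ?_
    filter_upwards [ae_restrict_mem hDm] with q hq
    rw [Real.norm_of_nonneg (sq_nonneg _)]
    exact hHb q hq
  have hHL : MemLp H 2 (volume.restrict D) := (memLp_two_iff_integrable_sq hHm).mpr hH2
  have hHint : ∫ q in D, H q ^ 2 ≤ (R * (1 + M)) ^ 2 * N ^ 2 := by
    calc _ ≤ ∫ q in D, (R * (1 + M)) ^ 2 * h q.1 q.2 ^ 2 :=
          setIntegral_mono_on hH2 (hhi'.const_mul _) hDm hHb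
      _ = (R * (1 + M)) ^ 2 * ∫ q in D, h q.1 q.2 ^ 2 := integral_const_mul _ _
      _ ≤ _ := by
        gcongr
        exact (setIntegral_mono_set hhi (Eventually.of_forall fun q => sq_nonneg _)
          hDsub.eventuallyLE).trans hhN
  have hF : ∀ w ≥ (0 : ℝ), Real.exp (-r * w) *
      (∫ s' in Ioc (0:ℝ) s, ∫ z in Ioi (0:ℝ), G (s - s') w z * σ z (u s' z) * h s' z) =
      ∫ q in D, Gr r (s - q.1) w q.2 * H q := by
    intro w hw
    have hi : IntegrableOn (fun q : ℝ × ℝ => Gr r (s - q.1) w q.2 * H q) D :=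
      (memLp_Gr r T s w hs.1 hs.2 hw hT).integrable_mul hHL
    rw [hD, Measure.volume_eq_prod, setIntegral_prod _ (by rwa [← Measure.volume_eq_prod]),
      ← integral_const_mul]
    congr 1; ext s'
    rw [← integral_const_mul]
    congr 1; ext z
    have : Real.exp (-r * w) = Real.exp (-r * (w - z)) * Real.exp (-r * z) := by
      rw [← Real.exp_add]; congr 1; ring
    simp only [hH, Gr]
    rw [this]; ring
  have hsub : (∫ q in D, Gr r (s - q.1) y q.2 * H q) - ∫ q in D, Gr r (s - q.1) x q.2 * H q =
      ∫ q in D, (Gr r (s - q.1) y q.2 - Gr r (s - q.1) x q.2) * H q := by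
    simp_rw [sub_mul]
    exact (integral_sub ((memLp_Gr r T s y hs.1 hs.2 hy hT).integrable_mul hHL)
      ((memLp_Gr r T s x hs.1 hs.2 hx hT).integrable_mul hHL)).symm
  rw [hF y hy, hF x hx, hsub]
  set I := ∫ q in D, (Gr r (s - q.1) y q.2 - Gr r (s - q.1) x q.2) * H q
  have hI : I ^ 2 ≤ K * |x - y| ^ (2 * θ) * (R * N * (1 + M)) ^ 2 := by
    calc I ^ 2 ≤ _ := sq_integral_mul_le (memLp_Gr_sub r T s x y hs.1 hs.2 hx hy hT) hHL
      _ ≤ K * |x - y| ^ (2 * θ) * ((R * (1 + M)) ^ 2 * N ^ 2) := by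
        gcongr
        exact hKdef ▸ integral_Gr_prod_le r T θ s x y hθ hθ1 hs.1 hs.2 hx hy hT
      _ = _ := by ring
  have sq_rpow : ∀ a : ℝ, 0 ≤ a → (a ^ 2) ^ (p / 2) = a ^ p := by
    intro a ha
    rw [← Real.rpow_natCast, ← Real.rpow_mul ha]
    congr 1; push_cast; ring
  have hN0 : 0 ≤ N := by linarith
  calc |I| ^ p = (I ^ 2) ^ (p / 2) := by rw [← sq_abs, sq_rpow _ (abs_nonneg _)]
    _ ≤ (K * |x - y| ^ (2 * θ) * (R * N * (1 + M)) ^ 2) ^ (p / 2) :=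
        Real.rpow_le_rpow (sq_nonneg _) hI (by linarith)
    _ = K ^ (p / 2) * |x - y| ^ ((p - 4) / 2) * (R ^ p * N ^ p * (1 + M) ^ p) := by
        rw [Real.mul_rpow (by positivity) (by positivity), sq_rpow _ (by positivity),
          Real.mul_rpow hK.le (by positivity), ← Real.rpow_mul (abs_nonneg _),
          Real.mul_rpow (by positivity) (by positivity), Real.mul_rpow hR.le hN0]
        congr 3
        rw [hθdef]; field_simp
    _ = _ := by field_simp
end
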